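/- Let S be an infinite set of natural numbers, each at least 5. Then there is no algorithm that, given a finite presentation, decides whether or not the group presented has a quotient isomorphic to the alternating group Alt(n) for some n ∈ S. Formally: the predicate on encoded finite presentations (s, L) given by '∃ n ∈ S, there exists a surjective group homomorphism from the presented group P(s,L) onto Alt(n)' is not a computable predicate (¬ ComputablePred). -/

import Mathlib

/-- The codes for each number of generators form a denumerable type. -/
instance (s : ℕ) : Denumerable (List (List (Fin s × Bool))) :=
  Denumerable.ofEncodableOfInfinite _

/-- The group presented by a finite presentation encoded as `(s, L)`, where `s` is the number
of generators and each entry of `L` is a word in the generators and their inverses. -/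
def presentedGroupOf (p : Σ s : ℕ, List (List (Fin s × Bool))) : Type :=
  PresentedGroup {x : FreeGroup (Fin p.1) | ∃ w ∈ p.2, x = FreeGroup.mk w}

instance (p : Σ s : ℕ, List (List (Fin s × Bool))) : Group (presentedGroupOf p) := by
  unfold presentedGroupOf; infer_instance

/-!
A machine that accepts some inputs and rejects others, with no computable separation of the two
sets, is simulated by a finite rewriting system whose relations hold in a monoid. An accepted
input becomes zero in the ring over `𝔽₂` defined by these relations together with the relation
that kills the accepting word. Each step leaves a tick on the tape, so that a rejected input is
equivalent to only finitely many words, and the functions on these words give a finite module over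
the ring on which the input acts nontrivially.

The relations of elementary `5 × 5` matrices turn the ring into a group: the commutator
`⁅1 + a Eᵢₖ, 1 + b Eₖⱼ⁆ = 1 + ab Eᵢⱼ` expresses multiplication. Let `w` be the matrix `1 + u Eᵢⱼ`
of the input `u`. Adjoin `y₀, …, y₃` with `w yₖ = yₖ² w` and an element that conjugates `w` to
`1 + E₀₁`. If `u = 0`, then `w = 1`, so `yₖ = 1` and `1 + E₀₁ = 1`, and the group collapses to a
cyclic one. If `u ≠ 0` in a finite quotient, then `w` and `1 + E₀₁` have order two in a finite
group, and this group acts on `m` points for every large `m` such that the two involutions have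
the same cycle type and four elements of order three inverted by `w` generate `Alt(m)`.
-/

open Function Turing
open scoped commutatorElement

/-- A machine with a stack for every `k : K`. In state `q` it pops the top letter `a` of the stack
`track q` and, if `next q a = some (l, q')`, pushes the word `l` onto that stack and enters state
`q'`; it halts if the stack is empty or `next q a = none`. -/
structure StackMachine (T K A : Type*) where
  /-- The stack that is read in a given state. -/
  track : T → K
  /-- The transition table. -/
  next : T → A → Option (List A × T)

namespace StackMachine

variable {T K A : Type*} [DecidableEq K]

/-- One step of a stack machine on the pair of its state and its stacks. -/
def step (M : StackMachine T K A) (c : T × (K → List A)) : Option (T × (K → List A)) :=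
  match c.2 (M.track c.1) with
  | [] => none
  | a :: r => (M.next c.1 a).map fun p => (p.2, update c.2 (M.track c.1) (p.1 ++ r))

/-- The configuration `d` is reached from `c` in finitely many steps. -/
def Reaches (M : StackMachine T K A) (c d : T × (K → List A)) : Prop :=
  StateTransition.Reaches M.step c d

theorem mem_step_iff (M : StackMachine T K A) {c d : T × (K → List A)} :
    d ∈ M.step c ↔ ∃ a r l, c.2 (M.track c.1) = a :: r ∧ M.next c.1 a = some (l, d.1) ∧
      d.2 = update c.2 (M.track c.1) (l ++ r) := by
  obtain ⟨q', S'⟩ := d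
  unfold step
  cases c.2 (M.track c.1) <;> simp [Prod.ext_iff, eq_comm]

section Restriction

variable (M : StackMachine T K A) (s : Set T)

open Classical in
/-- The machine `M` with its states restricted to `s`; transitions that leave `s` are removed. -/
noncomputable def restrict : StackMachine s K A where
  track q := M.track q
  next q a := (M.next q a).bind fun p => if h : p.2 ∈ s then some (p.1, ⟨p.2, h⟩) else none

variable {M s}

omit [DecidableEq K] in
theorem restrict_next_eq_none {q : s} {a : A} (h : M.next q a = none) :
    (M.restrict s).next q a = none := by
  simp [restrict, h]

theorem Reaches.restrict (hs : ∀ q ∈ s, ∀ a p, M.next q a = some p → p.2 ∈ s) {q : s}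
    {S : K → List A} {d : T × (K → List A)} (h : M.Reaches (q, S) d) :
    ∃ hd : d.1 ∈ s, (M.restrict s).Reaches (q, S) (⟨d.1, hd⟩, d.2) := by
  induction h with
  | refl => exact ⟨q.2, .refl⟩
  | @tail c d _ hcd ih =>
    obtain ⟨hc, ih⟩ := ih
    obtain ⟨a, r, l, hr, hn, hd⟩ := (M.mem_step_iff).1 hcd
    have hd' : d.1 ∈ s := hs c.1 hc a _ hn
    refine ⟨hd', ih.tail ((mem_step_iff _).2 ⟨a, r, l, hr, ?_, hd⟩)⟩
    simp [StackMachine.restrict, hn, hd']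

end Restriction

section OfTM2

variable {Γ Λ σ : Type*}

/-- The stacks `S` with the letters wrapped in `some` and a bottom marker `none` added to each. -/
def marked (S : K → List Γ) (k : K) : List (Option Γ) :=
  (S k).map some ++ [none]


omit [DecidableEq K] in
theorem marked_eq_cons (S : K → List Γ) (k : K) :
    marked S k = (S k).head? :: ((S k).head?.elim [] fun _ => (S k).tail.map some ++ [none]) := by
  unfold marked; cases S k <;> rfl

theorem marked_update (S : K → List Γ) (k : K) (l : List Γ) :
    marked (update S k l) = update (marked S) k (l.map some ++ [none]) := by
  funext i
  rcases eq_or_ne i k with rfl | hi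
  · simp [marked]
  · simp [marked, hi]

/-- The stack machine that performs every elementary operation of the program `P` as one step. Its
states are the statement that remains to be executed (`none` once the program has halted) and the
value of the local variable; the bottom marker of a stack plays the role of `none` in `head?`. -/
def ofTM2 (P : Λ → TM2.Stmt (fun _ : K => Γ) Λ σ) (k₀ : K) :
    StackMachine (Option (TM2.Stmt (fun _ : K => Γ) Λ σ) × σ) K (Option Γ) where
  track
    | (some (.push k _ _), _) | (some (.peek k _ _), _) | (some (.pop k _ _), _) => k
    | _ => k₀
  next
    | (none, _), _ => none
    | (some (.push _ f q), v), o => some ([some (f v), o], (some q, v))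
    | (some (.peek _ f q), v), o => some ([o], (some q, f v o))
    | (some (.pop _ f q), v), o => some (o.elim [none] fun _ => [], (some q, f v o))
    | (some (.load f q), v), o => some ([o], (some q, f v))
    | (some (.branch f q₁ q₂), v), o => some ([o], (some (bif f v then q₁ else q₂), v))
    | (some (.goto f), v), o => some ([o], (some (P (f v)), v))
    | (some .halt, v), o => some ([o], (none, v))

variable (P : Λ → TM2.Stmt (fun _ : K => Γ) Λ σ) (k₀ : K)

/-- The configuration of `ofTM2 P k₀` that represents a configuration of `P`. -/
def ofCfg (c : TM2.Cfg (fun _ : K => Γ) Λ σ) :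
    (Option (TM2.Stmt (fun _ : K => Γ) Λ σ) × σ) × (K → List (Option Γ)) :=
  ((c.l.map P, c.var), marked c.stk)

theorem ofTM2_step {q : TM2.Stmt (fun _ : K => Γ) Λ σ} {v : σ} {S S' : K → List Γ} {k : K}
    {l : List (Option Γ)} {q' : Option (TM2.Stmt (fun _ : K => Γ) Λ σ) × σ}
    (hk : (ofTM2 P k₀).track (some q, v) = k)
    (hq : (ofTM2 P k₀).next (some q, v) (S k).head? = some (l, q'))
    (hS : marked S' = update (marked S) k
      (l ++ (S k).head?.elim [] fun _ => (S k).tail.map some ++ [none])) :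
    (q', marked S') ∈ (ofTM2 P k₀).step ((some q, v), marked S) :=
  by subst hk; exact (mem_step_iff _).2 ⟨_, _, l, marked_eq_cons S _, hq, hS⟩

theorem marked_eq_update (S : K → List Γ) (k : K) :
    marked S = update (marked S) k
      ([(S k).head?] ++ (S k).head?.elim [] fun _ => (S k).tail.map some ++ [none]) := by
  rw [List.singleton_append, ← marked_eq_cons, update_eq_self]

theorem ofTM2_reaches_stepAux (q : TM2.Stmt (fun _ : K => Γ) Λ σ) (v : σ) (S : K → List Γ) :
    (ofTM2 P k₀).Reaches ((some q, v), marked S) (ofCfg P (TM2.stepAux q v S)) := by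
  induction q generalizing v S with
  | push k f q ih =>
    refine .head (ofTM2_step P k₀ (k := k) rfl rfl ?_) (ih v _)
    rw [marked_update]
    cases S k <;> simp
  | peek k f q ih => exact .head (ofTM2_step P k₀ rfl rfl (marked_eq_update S k)) (ih _ S)
  | pop k f q ih =>
    refine .head (ofTM2_step P k₀ (k := k) rfl rfl ?_) (ih _ _)
    rw [marked_update]
    cases S k <;> simp
  | load f q ih => exact .head (ofTM2_step P k₀ rfl rfl (marked_eq_update S k₀)) (ih _ S)
  | branch f q₁ q₂ ih₁ ih₂ =>
    refine .head (ofTM2_step P k₀ rfl rfl (marked_eq_update S k₀)) ?_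
    rw [TM2.stepAux]
    cases f v
    exacts [ih₂ v S, ih₁ v S]
  | goto f => exact .single (ofTM2_step P k₀ rfl rfl (marked_eq_update S k₀))
  | halt => exact .single (ofTM2_step P k₀ rfl rfl (marked_eq_update S k₀))

theorem ofTM2_reaches {c d : TM2.Cfg (fun _ : K => Γ) Λ σ} (h : TM2.Reaches P c d) :
    (ofTM2 P k₀).Reaches (ofCfg P c) (ofCfg P d) := by
  induction h with
  | refl => exact .refl
  | @tail c' d' _ hstep ih =>
    refine ih.trans ?_
    obtain ⟨_ | l, v, S⟩ := c'
    · simp at hstep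
    · obtain rfl : TM2.stepAux (P l) v S = d' := by simpa using hstep
      exact ofTM2_reaches_stepAux P k₀ (P l) v S

omit [DecidableEq K] in
theorem some_mem_stmts {P : Λ → TM2.Stmt (fun _ : K => Γ) Λ σ} {s : Finset Λ} {i : Λ}
    (hi : i ∈ s) : some (P i) ∈ TM2.stmts P s := by
  simp only [TM2.stmts, Finset.some_mem_insertNone, Finset.mem_biUnion]
  exact ⟨i, hi, TM2.stmts₁_self⟩

omit [DecidableEq K] in
theorem ofTM2_next_mem_stmts [Inhabited Λ] {s : Finset Λ} (hs : TM2.Supports P s)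
    {q : Option (TM2.Stmt (fun _ : K => Γ) Λ σ) × σ} (hq : q.1 ∈ TM2.stmts P s) {o : Option Γ}
    {p : List (Option Γ) × Option (TM2.Stmt (fun _ : K => Γ) Λ σ) × σ}
    (hp : (ofTM2 P k₀).next q o = some p) : p.2.1 ∈ TM2.stmts P s := by
  obtain ⟨_ | q, v⟩ := q
  · simp [ofTM2] at hp
  have sub {q'} (h : q' ∈ TM2.stmts₁ q) : some q' ∈ TM2.stmts P s := TM2.stmts_trans h hq
  cases q with
  | goto f =>
    obtain rfl := Option.some.inj hp
    exact some_mem_stmts (TM2.stmts_supportsStmt hs hq v)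
  | branch f q₁ q₂ =>
    obtain rfl := Option.some.inj hp
    apply sub
    cases f v <;> simp [TM2.stmts₁, TM2.stmts₁_self]
  | halt => obtain rfl := Option.some.inj hp; simp [TM2.stmts]
  | _ =>
    obtain rfl := Option.some.inj hp
    apply sub
    simp [TM2.stmts₁, TM2.stmts₁_self]

end OfTM2

end StackMachine

/-- A stack machine with a designated way of feeding it a binary word and of reading off a verdict:
the input is put on top of the base of the stack `inputTrack`, and on reaching the halting state
`final` the machine accepts if the letter on top of the stack read by `final` is `accept`. -/
structure Acceptor (T K A : Type*) extends StackMachine T K A where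
  /-- The initial state. -/
  start : T
  /-- The halting state. -/
  final : T
  next_final : ∀ a, next final a = none
  /-- The letters that encode the bits of the input. -/
  symbol : Bool → A
  /-- The stack that carries the input. -/
  inputTrack : K
  /-- The stacks below the input. -/
  base : K → List A
  /-- The letter that signals acceptance. -/
  accept : A

namespace Acceptor

variable {T K A : Type*} [DecidableEq K] (M : Acceptor T K A)

/-- The stacks on which the machine is started for the input `u`. -/
def input (u : List Bool) : K → List A :=
  update M.base M.inputTrack (u.map M.symbol ++ M.base M.inputTrack)

/-- On input `u` the machine halts and accepts. -/
def Accepts (u : List Bool) : Prop :=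
  ∃ S, M.Reaches (M.start, M.input u) (M.final, S) ∧ (S (M.track M.final)).head? = some M.accept

/-- On input `u` the machine halts and does not accept. -/
def Rejects (u : List Bool) : Prop :=
  ∃ S, M.Reaches (M.start, M.input u) (M.final, S) ∧ (S (M.track M.final)).head? ≠ some M.accept

end Acceptor

namespace StackMachine

section OfCode

open PartrecToTM2 ToPartrec

/-- The letters by which `PartrecToTM2` encodes binary digits. -/
def digit (b : Bool) : Γ' := bif b then .bit1 else .bit0

theorem trPosNum_eq_map_digit (p : PosNum) : trPosNum p = (p : ℕ).bits.map digit := by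
  induction p with
  | one => rfl
  | bit0 p ih =>
    rw [trPosNum, ih, PosNum.cast_bit0, ← two_mul, Nat.bit0_bits _ (PosNum.to_nat_pos p).ne']
    rfl
  | bit1 p ih =>
    rw [trPosNum, ih, PosNum.cast_bit1, ← two_mul, Nat.bit1_bits]
    rfl

theorem trNat_eq_map_digit (n : ℕ) : trNat n = n.bits.map digit := by
  rw [trNat]
  conv_rhs => rw [← Num.to_of_nat n]
  cases (n : Num) with
  | zero => rfl
  | pos p => exact trPosNum_eq_map_digit p

/-- The states of `ofTM2 tr` that can occur in the evaluation of the code `c`. -/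
def codeStates (c : Code) : Set (Option Stmt' × Option Γ') :=
  {q | q.1 ∈ letI : Inhabited Λ' := ⟨trNormal c .halt⟩; TM2.stmts tr (codeSupp c .halt)}

theorem finite_codeStates (c : Code) : (codeStates c).Finite :=
  ((Finset.finite_toSet _).prod Set.finite_univ).subset fun _ h => ⟨h, trivial⟩

theorem some_mem_codeStates (c : Code) (v : Option Γ') :
    (some (tr (trNormal c .halt)), v) ∈ codeStates c := by
  let : Inhabited Λ' := ⟨trNormal c .halt⟩
  exact some_mem_stmts (tr_supports c .halt).1

theorem none_mem_codeStates (c : Code) (v : Option Γ') : (none, v) ∈ codeStates c :=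
  Finset.none_mem_insertNone

/-- The stack machine that evaluates the code `c` and accepts if the result is `[0]`, which
`PartrecToTM2` encodes as a word with the letter `cons` in front. -/
noncomputable def ofCode (c : Code) : Acceptor (codeStates c) K' (Option Γ') where
  __ := (ofTM2 tr .main).restrict (codeStates c)
  start := ⟨(some (tr (trNormal c .halt)), none), some_mem_codeStates c none⟩
  final := ⟨(none, none), none_mem_codeStates c none⟩
  next_final _ := restrict_next_eq_none rfl
  symbol b := some (digit b)
  inputTrack := .main
  base := marked (K'.elim [.cons] [] [] [])
  accept := some .cons

theorem ofCode_input (c : Code) (n : ℕ) :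
    (ofCode c).input n.bits = marked (K'.elim (trList [n]) [] [] []) := by
  rw [← K'.elim_update_main (a := [.cons]), marked_update]
  simp [Acceptor.input, ofCode, marked, trNat_eq_map_digit, comp_def]

theorem ofCode_reaches {c : Code} {n : ℕ} {l : List ℕ} (h : l ∈ c.eval [n]) :
    (ofCode c).Reaches ((ofCode c).start, (ofCode c).input n.bits)
      ((ofCode c).final, marked (K'.elim (trList l) [] [] [])) := by
  have hl : halt l ∈ StateTransition.eval (TM2.step tr) (init c [n]) := by
    rw [tr_eval]
    exact Part.mem_map halt h
  let : Inhabited Λ' := ⟨trNormal c .halt⟩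
  obtain ⟨_, hr⟩ := (ofTM2_reaches tr .main (StateTransition.mem_eval.1 hl).1).restrict
    (s := codeStates c) (q := (ofCode c).start)
    fun q hq o p hp => ofTM2_next_mem_stmts tr .main (tr_supports c .halt) hq hp
  rw [ofCode_input]
  exact hr

end OfCode

end StackMachine

instance : Finite PartrecToTM2.K' :=
  .of_surjective ![.main, .rev, .aux, .stack] fun
    | .main => ⟨0, rfl⟩
    | .rev => ⟨1, rfl⟩
    | .aux => ⟨2, rfl⟩
    | .stack => ⟨3, rfl⟩

theorem exists_acceptor {f : ℕ →. ℕ} (hf : Partrec f) :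
    ∃ (T K A : Type) (_ : Finite T) (_ : Finite K) (_ : Finite A) (_ : DecidableEq K)
      (M : Acceptor T K A), ∀ n, (0 ∈ f n → M.Accepts n.bits) ∧ (1 ∈ f n → M.Rejects n.bits) := by
  obtain ⟨c, hc⟩ := ToPartrec.Code.exists_code (Nat.Partrec'.part_iff₁.2 hf)
  refine ⟨_, _, _, (StackMachine.finite_codeStates c).to_subtype, inferInstance, inferInstance,
    inferInstance, StackMachine.ofCode c, fun n => ?_⟩
  have mem_eval {m : ℕ} (hm : m ∈ f n) : [m] ∈ c.eval [n] := by
    rw [show [n] = (n ::ᵥ .nil : List.Vector ℕ 1).1 from rfl, hc]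
    exact Part.mem_map pure hm
  refine ⟨fun h => ⟨_, StackMachine.ofCode_reaches (mem_eval h), ?_⟩, fun h =>
    ⟨_, StackMachine.ofCode_reaches (mem_eval h), ?_⟩⟩
  · simp [StackMachine.marked, StackMachine.ofCode, StackMachine.ofTM2, StackMachine.restrict]
  · simp [StackMachine.marked, StackMachine.ofCode, StackMachine.ofTM2, StackMachine.restrict,
      StackMachine.trNat_eq_map_digit, StackMachine.digit]

/-- The alphabet in which configurations are written: states, and on the tape the cells `(k, a)`,
which carry the letter `a` of the stack `k`, and a tick `none`, which counts steps. -/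
abbrev Letter (T K A : Type*) := T ⊕ Option (K × A)

section Tape

variable {T K A : Type*}

/-- The element of the free monoid spelled by a tape. -/
def tapeWord (t : List (Option (K × A))) : FreeMonoid (Letter T K A) :=
  FreeMonoid.ofList (t.map .inr)

theorem tapeWord_append (t t' : List (Option (K × A))) :
    (tapeWord (t ++ t') : FreeMonoid (Letter T K A)) = tapeWord t * tapeWord t' :=
  congrArg FreeMonoid.ofList List.map_append

theorem tapeWord_mul_eq_iff {t₁ t : List (Option (K × A))} {s : FreeMonoid (Letter T K A)} :
    tapeWord t₁ * s = tapeWord t ↔ ∃ t₂, t = t₁ ++ t₂ ∧ s = tapeWord t₂ := by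
  constructor
  · intro h
    obtain ⟨t₁', t₂, rfl, h₁, rfl⟩ := List.append_eq_map_iff.1 h
    exact ⟨t₂, by rw [List.map_injective_iff.2 Sum.inr_injective h₁], rfl⟩
  · rintro ⟨t₂, rfl, rfl⟩
    exact (tapeWord_append t₁ t₂).symm

theorem mul_of_inl_mul_eq_iff {p s : FreeMonoid (Letter T K A)} {q q' : T}
    {t : List (Option (K × A))} :
    p * (.of (.inl q) * s) = .of (.inl q') * tapeWord t ↔ p = 1 ∧ q = q' ∧ s = tapeWord t := by
  refine ⟨fun h => ?_, by rintro ⟨rfl, rfl, rfl⟩; rfl⟩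
  have h' : p.toList ++ .inl q :: s.toList = .inl q' :: t.map .inr := h
  obtain ⟨hp, hl⟩ | ⟨p', -, hl⟩ := List.append_eq_cons_iff.1 h'
  · obtain ⟨⟨⟩, hs⟩ := List.cons_eq_cons.1 hl
    exact ⟨hp, rfl, hs⟩
  · have : Sum.inl q ∈ t.map (Sum.inr : _ → Letter T K A) := by simp [hl]
    simp at this

theorem mul_tapeWord_mul_eq_iff {p s : FreeMonoid (Letter T K A)} {q : T} {x : Option (K × A)}
    {t t' : List (Option (K × A))} :
    p * (tapeWord (x :: t') * s) = .of (.inl q) * tapeWord t ↔ ∃ t₁ t₂,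
      p = .of (.inl q) * tapeWord t₁ ∧ s = tapeWord t₂ ∧ t = t₁ ++ x :: t' ++ t₂ := by
  constructor
  · intro h
    have h' : p.toList ++ (tapeWord (x :: t') * s).toList = .inl q :: t.map .inr := h
    obtain ⟨-, hl⟩ | ⟨p', hp, hl⟩ := List.append_eq_cons_iff.1 h'
    · simp [tapeWord] at hl
    · obtain ⟨t₁, t₀, rfl, rfl, h₀⟩ := List.map_eq_append_iff.1 hl
      obtain ⟨t₂, rfl, hs⟩ := tapeWord_mul_eq_iff.1 (congrArg FreeMonoid.ofList h₀.symm)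
      exact ⟨t₁, t₂, hp, hs, by simp⟩
  · rintro ⟨t₁, t₂, rfl, rfl, rfl⟩
    simp only [tapeWord_append, mul_assoc]

variable [DecidableEq K]

/-- The content of the stack `k` on a tape, on which the stacks may be interleaved arbitrarily. -/
def content (k : K) (t : List (Option (K × A))) : List A :=
  t.filterMap fun x => x.bind fun p => if p.1 = k then some p.2 else none

@[simp] theorem content_nil (k : K) : content k ([] : List (Option (K × A))) = [] := rfl

@[simp] theorem content_append (k : K) (t t' : List (Option (K × A))) :
    content k (t ++ t') = content k t ++ content k t' :=
  List.filterMap_append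

@[simp] theorem content_tick_cons (k : K) (t : List (Option (K × A))) :
    content k (none :: t) = content k t := rfl

@[simp] theorem content_cell_cons_self (k : K) (a : A) (t : List (Option (K × A))) :
    content k (some (k, a) :: t) = a :: content k t := by
  simp [content]

theorem content_cons_of_ne {k : K} {x : Option (K × A)} (hx : x.map Prod.fst ≠ some k)
    (t : List (Option (K × A))) : content k (x :: t) = content k t := by
  cases x <;> simp_all [content]

@[simp] theorem content_map_cell_self (k : K) (l : List A) :
    content k (l.map fun a => some (k, a)) = l := by
  induction l <;> simp_all

theorem content_map_cell_of_ne {j k : K} (h : j ≠ k) (l : List A) :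
    content k (l.map fun a => some (j, a)) = [] := by
  induction l with
  | nil => rfl
  | cons a l ih => simpa [content_cons_of_ne (k := k) (x := some (j, a)) (by simpa using h)]

theorem content_map_cell_append (k : K) (l : List A) (t : List (Option (K × A))) :
    (fun j => content j (l.map (fun a => some (k, a)) ++ t)) =
      update (fun j => content j t) k (l ++ content k t) := by
  funext j
  rcases eq_or_ne j k with rfl | hj
  · simp
  · simp [hj, content_map_cell_of_ne hj.symm]

theorem content_replace_top (k : K) (a : A) (l : List A) (t : List (Option (K × A))) :
    (fun j => content j (l.map (fun b => some (k, b)) ++ none :: t)) =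
      update (fun j => content j (some (k, a) :: t)) k (l ++ content k t) := by
  rw [content_map_cell_append]
  funext j
  rcases eq_or_ne j k with rfl | hj
  · simp
  · simp [hj, content_cons_of_ne (x := some (k, a)) (by simpa using hj.symm)]

theorem content_swap (k : K) {x y : Option (K × A)} (h : x.map Prod.fst ≠ y.map Prod.fst)
    (t : List (Option (K × A))) : content k (x :: y :: t) = content k (y :: x :: t) := by
  by_cases hx : x.map Prod.fst = some k
  · have hy : y.map Prod.fst ≠ some k := hx ▸ h.symm
    obtain ⟨⟨_, a⟩, rfl, rfl⟩ := Option.map_eq_some_iff.1 hx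
    simp [content_cons_of_ne hy]
  · rw [content_cons_of_ne hx, ← List.singleton_append, ← List.singleton_append (l := x :: t),
      content_append, content_append, content_cons_of_ne hx]

theorem exists_content_eq [Finite K] (S : K → List A) :
    ∃ t : List (Option (K × A)), (fun k => content k t) = S := by
  have := Fintype.ofFinite K
  suffices h : ∀ s : Finset K, ∃ t : List (Option (K × A)),
      (fun k => content k t) = fun k => if k ∈ s then S k else [] by
    simpa using h .univ
  intro s
  induction s using Finset.induction with
  | empty => exact ⟨[], by simp⟩
  | insert k s hk ih =>
    obtain ⟨t, ht⟩ := ih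
    refine ⟨(S k).map (fun a => some (k, a)) ++ t, ?_⟩
    rw [content_map_cell_append, ht]
    funext j
    rcases eq_or_ne j k with rfl | hj
    · simpa [hk] using congrFun ht j
    · simp [hj]

/-- The number of ticks on a tape. -/
def ticks (t : List (Option (K × A))) : ℕ := t.countP Option.isNone

omit [DecidableEq K] in
theorem ticks_cell_append (k : K) (a : A) (t : List (Option (K × A))) :
    ticks ([some (k, a)] ++ t) = ticks t := by
  simp [ticks]

omit [DecidableEq K] in
theorem ticks_map_cell_append_tick (k : K) (l : List A) (t : List (Option (K × A))) :
    ticks (l.map (fun a => some (k, a)) ++ [none] ++ t) = ticks t + 1 := by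
  simp [ticks, comp_def]

theorem length_eq_sum_content_add_ticks [Fintype K] (t : List (Option (K × A))) :
    t.length = ∑ k, (content k t).length + ticks t := by
  induction t with
  | nil => simp [ticks]
  | cons x t ih =>
    obtain _ | ⟨k, a⟩ := x
    · simp [ih, ticks, add_assoc]
    · have h (j : K) : (content j (some (k, a) :: t)).length =
          (content j t).length + if k = j then 1 else 0 := by
        by_cases hj : k = j <;> simp [content, hj]
      simp [ih, h, Finset.sum_add_distrib, ticks, add_right_comm]

end Tape

namespace StackMachine

variable {T K A : Type*} (M : StackMachine T K A)

/-- The rewriting rules of a stack machine: a state executes its transition on the cell next to it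
and leaves a tick behind; tape letters that do not belong to the same stack commute. -/
inductive Rule : FreeMonoid (Letter T K A) → FreeMonoid (Letter T K A) → Prop
  | step {q q' : T} {a : A} {l : List A} (h : M.next q a = some (l, q')) :
      Rule (.of (.inl q) * tapeWord [some (M.track q, a)])
        (.of (.inl q') * tapeWord (l.map (fun b => some (M.track q, b)) ++ [none]))
  | comm {x y : Option (K × A)} (h : x.map Prod.fst ≠ y.map Prod.fst) :
      Rule (tapeWord [x, y]) (tapeWord [y, x])

section Congruence

variable [DecidableEq K]

theorem exists_tapeWord_cons {k : K} {a : A} {r : List A} {t : List (Option (K × A))}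
    (h : content k t = a :: r) :
    ∃ t', (fun j => content j t) = (fun j => content j (some (k, a) :: t')) ∧
      conGen M.Rule (tapeWord t) (tapeWord (some (k, a) :: t')) := by
  induction t with
  | nil => simp at h
  | cons x t ih =>
    by_cases hx : x.map Prod.fst = some k
    · obtain ⟨⟨_, b⟩, rfl, rfl⟩ := Option.map_eq_some_iff.1 hx
      obtain ⟨rfl, -⟩ : b = a ∧ _ := by simpa using h
      exact ⟨t, rfl, (conGen M.Rule).refl _⟩
    · rw [content_cons_of_ne hx] at h
      obtain ⟨t', hc, ht'⟩ := ih h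
      refine ⟨x :: t', funext fun j => ?_, ?_⟩
      · rw [content_swap j (x := some (k, a)) (by simpa [eq_comm] using hx),
          ← List.singleton_append, content_append, congrFun hc j, ← content_append,
          List.singleton_append]
      · have hswap := ConGen.Rel.of _ _ (Rule.comm (M := M) (x := x) (y := some (k, a)) hx)
        exact ((conGen M.Rule).mul ((conGen M.Rule).refl (.of (.inr x))) ht').trans
          ((conGen M.Rule).mul hswap ((conGen M.Rule).refl (tapeWord t')))

theorem Reaches.conGen_tapeWord {q q' : T} {S' : K → List A} {t : List (Option (K × A))}
    (h : M.Reaches (q, fun k => content k t) (q', S')) :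
    ∃ t', (fun k => content k t') = S' ∧ conGen M.Rule (.of (.inl q) * tapeWord t)
      (.of (.inl q') * tapeWord t') := by
  generalize hc : (q', S') = c at h
  induction h generalizing q' S' with
  | refl => obtain ⟨rfl, rfl⟩ := hc; exact ⟨t, rfl, (conGen M.Rule).refl _⟩
  | @tail c d _ hstep ih =>
    obtain rfl := hc
    obtain ⟨t₁, ht₁, hcon⟩ := ih rfl
    obtain ⟨a, r, l, hr, hn, rfl⟩ := M.mem_step_iff.1 hstep
    rw [← ht₁] at hr
    obtain ⟨t₂, ht₂, hcon₂⟩ := M.exists_tapeWord_cons hr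
    refine ⟨l.map (fun b => some (M.track c.1, b)) ++ none :: t₂, ?_, (conGen M.Rule).trans hcon ?_⟩
    · obtain ⟨-, rfl⟩ : a = a ∧ content (M.track c.1) t₂ = r := by
        simpa [hr, eq_comm] using congrFun ht₂ (M.track c.1)
      rw [content_replace_top (a := a), ← ht₁, ht₂]
    · have hrule : conGen M.Rule _ _ := ConGen.Rel.of _ _ (Rule.step hn)
      refine (conGen M.Rule).trans ((conGen M.Rule).mul ((conGen M.Rule).refl _) hcon₂) ?_
      simpa [tapeWord, mul_assoc] using
        (conGen M.Rule).mul hrule ((conGen M.Rule).refl (tapeWord t₂))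

end Congruence

section RunningWords

variable [DecidableEq K]

/-- From the configuration `c` the machine runs for exactly `n` steps and ends in `d`. -/
def RunsIn (n : ℕ) (c d : T × (K → List A)) : Prop :=
  (fun o => o.bind M.step)^[n] (some c) = some d

theorem exists_runsIn {c d : T × (K → List A)} (h : M.Reaches c d) : ∃ n, M.RunsIn n c d := by
  induction h with
  | refl => exact ⟨0, rfl⟩
  | tail _ hstep ih =>
    obtain ⟨n, hn⟩ := ih
    exact ⟨n + 1, by rw [RunsIn, iterate_succ_apply', hn]; exact hstep⟩

theorem runsIn_succ_iff {n : ℕ} {c c' d : T × (K → List A)} (h : M.step c = some c') :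
    M.RunsIn (n + 1) c d ↔ M.RunsIn n c' d := by
  simp [RunsIn, h]

theorem RunsIn.eq_of_step_eq_none {n : ℕ} {c d : T × (K → List A)} (h : M.RunsIn n c d)
    (hc : M.step c = none) : c = d := by
  cases n with
  | zero => exact Option.some.inj h
  | succ n =>
    have hnone : (fun o => o.bind M.step)^[n] none = none := iterate_fixed rfl n
    simp [RunsIn, hc, hnone] at h

theorem sum_length_le_of_runsIn [Fintype K] {n : ℕ} {c d : T × (K → List A)}
    (h : M.RunsIn n c d) : ∑ k, (c.2 k).length ≤ ∑ k, (d.2 k).length + n := by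
  induction n generalizing c with
  | zero => obtain rfl : c = d := Option.some.inj h; rfl
  | succ n ih =>
    rcases hstep : M.step c with _ | c'
    · rw [h.eq_of_step_eq_none M hstep]; omega
    refine (?_ : _ ≤ ∑ k, (c'.2 k).length + 1).trans
      (by linarith [ih ((M.runsIn_succ_iff hstep).1 h)])
    obtain ⟨a, r, l, hr, -, hS⟩ := M.mem_step_iff.1 hstep
    have hk (k : K) : (c.2 k).length ≤ (c'.2 k).length + if M.track c.1 = k then 1 else 0 := by
      rw [hS]
      by_cases hk : M.track c.1 = k
      · subst hk; simp [hr]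
      · simp [hk, Ne.symm hk]
    simpa [Finset.sum_add_distrib] using Finset.sum_le_sum fun k (_ : k ∈ Finset.univ) => hk k

/-- The words consisting of a state and a tape from which the machine runs into `d`, the number of
ticks on the tape and the number of steps that are left adding up to `N`. -/
def runningWords (d : T × (K → List A)) (N : ℕ) : Set (FreeMonoid (Letter T K A)) :=
  {w | ∃ q t n, w = .of (.inl q) * tapeWord t ∧ M.RunsIn n (q, fun k => content k t) d ∧
    ticks t + n = N}

theorem finite_runningWords [Finite T] [Finite K] [Finite A] (d : T × (K → List A)) (N : ℕ) :
    (M.runningWords d N).Finite := by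
  have := Fintype.ofFinite K
  refine (List.finite_length_le (Letter T K A) (∑ k, (d.2 k).length + N + 1)).subset ?_
  rintro _ ⟨q, t, n, rfl, hrun, hN⟩
  change ((t.map Sum.inr).length + 1 : ℕ) ≤ _
  have := M.sum_length_le_of_runsIn hrun
  rw [List.length_map, length_eq_sum_content_add_ticks]
  dsimp only at this
  omega

theorem mul_of_inl_mul_mem_runningWords {p s : FreeMonoid (Letter T K A)} {q : T}
    {d : T × (K → List A)} {N : ℕ} :
    p * (.of (.inl q) * s) ∈ M.runningWords d N ↔ p = 1 ∧ ∃ t n, s = tapeWord t ∧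
      M.RunsIn n (q, fun k => content k t) d ∧ ticks t + n = N := by
  simp only [runningWords, Set.mem_ofPred_eq, mul_of_inl_mul_eq_iff]
  constructor
  · rintro ⟨_, t, n, ⟨rfl, rfl, rfl⟩, h⟩
    exact ⟨rfl, t, n, rfl, h⟩
  · rintro ⟨rfl, t, n, rfl, h⟩
    exact ⟨q, t, n, ⟨rfl, rfl, rfl⟩, h⟩

theorem mul_tapeWord_swap_mul_mem_runningWords {p s : FreeMonoid (Letter T K A)}
    {d : T × (K → List A)} {N : ℕ} {x y : Option (K × A)} (h : x.map Prod.fst ≠ y.map Prod.fst)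
    (hw : p * (tapeWord [x, y] * s) ∈ M.runningWords d N) :
    p * (tapeWord [y, x] * s) ∈ M.runningWords d N := by
  obtain ⟨q, t, n, hw, hrun, hN⟩ := hw
  obtain ⟨t₁, t₂, rfl, rfl, rfl⟩ := mul_tapeWord_mul_eq_iff.1 hw
  refine ⟨q, t₁ ++ [y, x] ++ t₂, n, mul_tapeWord_mul_eq_iff.2 ⟨t₁, t₂, rfl, rfl, rfl⟩, ?_, ?_⟩
  · convert hrun using 3 with k
    simpa using (content_swap k h t₂).symm
  · rw [← hN, ticks, ticks]
    congr 1
    exact (((List.Perm.swap x y []).append_left t₁).append_right t₂).countP_eq _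

theorem mul_step_mul_mem_runningWords_iff {p s : FreeMonoid (Letter T K A)}
    {d : T × (K → List A)} {N : ℕ} (hd : M.step d = none) {q q' : T} {a : A} {l : List A}
    (h : M.next q a = some (l, q')) :
    p * (.of (.inl q) * (tapeWord [some (M.track q, a)] * s)) ∈ M.runningWords d N ↔
      p * (.of (.inl q') * (tapeWord (l.map (fun b => some (M.track q, b)) ++ [none]) * s)) ∈
        M.runningWords d N := by
  have hstep (t : List (Option (K × A))) :
      M.step (q, fun k => content k (some (M.track q, a) :: t)) = some (q', fun k =>
        content k (l.map (fun b => some (M.track q, b)) ++ none :: t)) :=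
    M.mem_step_iff.2 ⟨a, _, l, by simp, h, content_replace_top _ a l t⟩
  simp only [mul_of_inl_mul_mem_runningWords, tapeWord_mul_eq_iff]
  refine and_congr_right fun _ => ⟨?_, ?_⟩
  · rintro ⟨_, _ | n, ⟨t, rfl, rfl⟩, hrun, hN⟩
    · simp [← Option.some.inj hrun, hstep] at hd
    · refine ⟨_, n, ⟨t, rfl, rfl⟩, ?_, ?_⟩
      · simpa using (M.runsIn_succ_iff (hstep t)).1 hrun
      · rw [ticks_cell_append] at hN
        rw [ticks_map_cell_append_tick]
        omega
  · rintro ⟨_, n, ⟨t, rfl, rfl⟩, hrun, hN⟩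
    refine ⟨_, n + 1, ⟨t, rfl, rfl⟩, (M.runsIn_succ_iff (hstep t)).2 (by simpa using hrun), ?_⟩
    rw [ticks_map_cell_append_tick] at hN
    rw [ticks_cell_append]
    omega

theorem mem_runningWords_iff_of_rule {d : T × (K → List A)} {N : ℕ} (hd : M.step d = none)
    {l r : FreeMonoid (Letter T K A)} (h : M.Rule l r) (p s : FreeMonoid (Letter T K A)) :
    p * l * s ∈ M.runningWords d N ↔ p * r * s ∈ M.runningWords d N := by
  cases h with
  | step h => simpa only [mul_assoc] using M.mul_step_mul_mem_runningWords_iff hd h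
  | comm h =>
    simp only [mul_assoc]
    exact ⟨M.mul_tapeWord_swap_mul_mem_runningWords h,
      M.mul_tapeWord_swap_mul_mem_runningWords h.symm⟩

end RunningWords

end StackMachine

namespace Acceptor

variable {T K A : Type*} [DecidableEq K] [Finite K] (M : Acceptor T K A)

/-- A tape with the base of the stacks of `M`. -/
noncomputable def baseTape : List (Option (K × A)) := (exists_content_eq M.base).choose

/-- The word that encodes the configuration in which `M` is started for the input `u`. -/
noncomputable def inputWord (u : List Bool) : FreeMonoid (Letter T K A) :=
  .of (.inl M.start) *
    tapeWord (u.map (fun b => some (M.inputTrack, M.symbol b)) ++ M.baseTape)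

omit [DecidableEq K] [Finite K] in
/-- The word with which the encoding of an accepting configuration can be made to begin. -/
def acceptWord : FreeMonoid (Letter T K A) :=
  .of (.inl M.final) * tapeWord [some (M.track M.final, M.accept)]

theorem content_inputTape (u : List Bool) :
    (fun k => content k (u.map (fun b => some (M.inputTrack, M.symbol b)) ++ M.baseTape)) =
      M.input u := by
  have h : (fun k => content k M.baseTape) = M.base := (exists_content_eq M.base).choose_spec
  have := content_map_cell_append M.inputTrack (u.map M.symbol) M.baseTape
  rw [List.map_map] at this
  rw [input, ← h]
  exact this

theorem Accepts.conGen_inputWord {u : List Bool} (h : M.Accepts u) :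
    ∃ v, conGen M.Rule (M.inputWord u) (M.acceptWord * v) := by
  obtain ⟨S, hS, hacc⟩ := h
  rw [← content_inputTape] at hS
  obtain ⟨t, rfl, ht⟩ := hS.conGen_tapeWord
  obtain ⟨r, hr⟩ := List.head?_eq_some_iff.1 hacc
  obtain ⟨t', -, ht'⟩ := M.exists_tapeWord_cons hr
  refine ⟨tapeWord t', (conGen M.Rule).trans ht ?_⟩
  rw [acceptWord, mul_assoc, ← tapeWord_append]
  exact (conGen M.Rule).mul ((conGen M.Rule).refl _) ht'

theorem Rejects.exists_language [Finite T] [Finite A] {u : List Bool} (h : M.Rejects u) :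
    ∃ L : Set (FreeMonoid (Letter T K A)), L.Finite ∧ M.inputWord u ∈ L ∧
      (∀ l r, M.Rule l r → ∀ p s, p * l * s ∈ L ↔ p * r * s ∈ L) ∧
        ∀ p s, p * M.acceptWord * s ∉ L := by
  obtain ⟨S, hS, hrej⟩ := h
  rw [← content_inputTape] at hS
  obtain ⟨n, hn⟩ := M.exists_runsIn hS
  have step_final (S' : K → List A) : M.step (M.final, S') = none := by
    simp only [StackMachine.step, M.next_final, Option.map_none]
    split <;> rfl
  refine ⟨M.runningWords (M.final, S) _, M.finite_runningWords _ _, ⟨_, _, n, rfl, hn, rfl⟩,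
    fun l r h p s => M.mem_runningWords_iff_of_rule (step_final S) h p s, fun p s hmem => ?_⟩
  rw [acceptWord, mul_assoc, mul_assoc, M.mul_of_inl_mul_mem_runningWords] at hmem
  obtain ⟨-, t, n, hs, hrun, -⟩ := hmem
  obtain ⟨t', rfl, rfl⟩ := tapeWord_mul_eq_iff.1 hs
  obtain rfl : (fun k => content k ([some (M.track M.final, M.accept)] ++ t')) = S :=
    congrArg Prod.snd (hrun.eq_of_step_eq_none _ (step_final _))
  simp at hrej

end Acceptor

section Commutators

variable {G : Type*} [Group G]

theorem commutatorElement_commutatorElement_eq_of_commute {x y z : G} (hxz : Commute x z)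
    (h : Commute ⁅x, y⁆ ⁅y, z⁆) (h' : Commute ⁅y, z⁆ ⁅⁅x, y⁆, z⁆) :
    ⁅x, ⁅y, z⁆⁆ = ⁅⁅x, y⁆, z⁆ := by
  have hconj : x * ⁅y, z⁆ * x⁻¹ = ⁅y, z⁆ * ⁅⁅x, y⁆, z⁆ :=
    calc x * ⁅y, z⁆ * x⁻¹ = ⁅x * y * x⁻¹, x * z * x⁻¹⁆ := conjugate_commutatorElement ..
      _ = ⁅x * y * x⁻¹, z⁆ := by rw [hxz.eq, mul_inv_cancel_right]
      _ = ⁅x, y⁆ * ⁅y, z⁆ * ⁅x, y⁆⁻¹ * ⁅⁅x, y⁆, z⁆ := by simp only [commutatorElement_def]; group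
      _ = ⁅y, z⁆ * ⁅⁅x, y⁆, z⁆ := by rw [h.eq, mul_inv_cancel_right]
  rw [commutatorElement_def x ⁅y, z⁆, hconj, h'.eq, mul_inv_cancel_right]

theorem commute_commutatorElement {x y z : G} (hy : Commute x y) (hz : Commute x z) :
    Commute x ⁅y, z⁆ := by
  rw [commutatorElement_def]
  exact ((hy.mul_right hz).mul_right hy.inv_right).mul_right hz.inv_right

end Commutators

theorem exists_fin_five_ne (i j p q : Fin 5) : ∃ k, i ≠ k ∧ k ≠ j ∧ p ≠ k ∧ k ≠ q := by
  decide +revert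

section RootFamilies

variable {G : Type*} [Group G]

/-- Two families `X` and `Y` of group elements commute like families of elementary matrices
`1 + X Eᵢⱼ` and `1 + Y Eᵢⱼ`, of which only those with `i ≠ j` matter. -/
def RootCommute (X Y : Fin 5 → Fin 5 → G) : Prop :=
  ∀ ⦃i j p q⦄, i ≠ j → p ≠ q → j ≠ p → i ≠ q → Commute (X i j) (Y p q)

/-- The family `Z` is the product of `X` and `Y` as in the commutator formula
`⁅1 + X Eᵢₖ, 1 + Y Eₖⱼ⁆ = 1 + X Y Eᵢⱼ` for elementary matrices. -/
def IsRootProd (X Y Z : Fin 5 → Fin 5 → G) : Prop :=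
  ∀ ⦃i k j⦄, i ≠ k → k ≠ j → i ≠ j → ⁅X i k, Y k j⁆ = Z i j

variable {X Y Z W XY YZ : Fin 5 → Fin 5 → G}

theorem RootCommute.symm (h : RootCommute X Y) : RootCommute Y X :=
  fun _ _ _ _ hij hpq hjp hiq => (h hpq hij hiq.symm hjp.symm).symm

theorem RootCommute.of_isRootProd (hX : RootCommute W X) (hY : RootCommute W Y)
    (h : IsRootProd X Y Z) : RootCommute W Z := by
  intro i j p q hij hpq hjp hiq
  obtain ⟨k, hpk, hkq, hik, hkj⟩ := exists_fin_five_ne p q i j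
  rw [← h hpk hkq hpq]
  exact commute_commutatorElement (hX hij hpk hjp hik) (hY hij hkq hkj.symm hiq)

theorem commutatorElement_eq_of_isRootProd (hXY : IsRootProd X Y XY) (hYZ : IsRootProd Y Z YZ)
    (h₁ : RootCommute X Z) (h₂ : RootCommute XY YZ) (h₃ : RootCommute YZ Z) {i k l j : Fin 5}
    (hik : i ≠ k) (hil : i ≠ l) (hij : i ≠ j) (hkl : k ≠ l) (hkj : k ≠ j) (hlj : l ≠ j) :
    ⁅X i k, YZ k j⁆ = ⁅XY i l, Z l j⁆ := by
  have hxy := hXY hik hkl hil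
  have hyz := hYZ hkl hlj hkj
  rw [← hxy, ← hyz]
  refine commutatorElement_commutatorElement_eq_of_commute (h₁ hik hlj hkl hij) ?_ ?_ <;>
    rw [hxy, hyz]
  · exact h₂ hil hkj hkl.symm hij
  · exact commute_commutatorElement (h₂.symm hkj hil hij.symm hkl) (h₃ hkj hlj hlj.symm hkj)

/-- The product of two families, computed with an arbitrary intermediate index. -/
noncomputable def rootProd (X Y : Fin 5 → Fin 5 → G) : Fin 5 → Fin 5 → G := fun i j =>
  let k := (exists_fin_five_ne i j i j).choose
  ⁅X i k, Y k j⁆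

theorem isRootProd_rootProd_of_unital {U : Fin 5 → Fin 5 → G} (hX : IsRootProd X U X)
    (hY : IsRootProd U Y Y) (hXY : RootCommute X Y) (hYY : RootCommute Y Y) :
    IsRootProd X Y (rootProd X Y) := by
  intro i k j hik hkj hij
  have hc := (exists_fin_five_ne i j i j).choose_spec
  rcases eq_or_ne k (exists_fin_five_ne i j i j).choose with hk | hk
  · rw [rootProd, ← hk]
  · exact commutatorElement_eq_of_isRootProd hX hY hXY hXY hYY hik hc.1 hij hk hkj hc.2.1

theorem IsRootProd.assoc_left (hXY : IsRootProd X Y XY) (hYZ : IsRootProd Y Z YZ)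
    (hW : IsRootProd XY Z W) (h₁ : RootCommute X Z) (h₂ : RootCommute XY YZ)
    (h₃ : RootCommute YZ Z) : IsRootProd X YZ W := by
  intro i k j hik hkj hij
  obtain ⟨l, hil, hlj, hkl, -⟩ := exists_fin_five_ne i j k k
  rw [commutatorElement_eq_of_isRootProd hXY hYZ h₁ h₂ h₃ hik hil hij hkl hkj hlj, hW hil hlj hij]

theorem IsRootProd.assoc_right (hXY : IsRootProd X Y XY) (hYZ : IsRootProd Y Z YZ)
    (hW : IsRootProd X YZ W) (h₁ : RootCommute X Z) (h₂ : RootCommute XY YZ)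
    (h₃ : RootCommute YZ Z) : IsRootProd XY Z W := by
  intro i l j hil hlj hij
  obtain ⟨k, hik, hkj, -, hkl⟩ := exists_fin_five_ne i j i l
  rw [← commutatorElement_eq_of_isRootProd hXY hYZ h₁ h₂ h₃ hik hil hij hkl hkj hlj, hW hik hkj hij]

end RootFamilies

section Steinberg

variable {A G : Type*} [Group G]

/-- The elements `g a i j`, to be thought of as the elementary matrices `1 + a Eᵢⱼ` for `i ≠ j`
with `none` in the role of the scalar `1`, satisfy those Steinberg relations that do not mention
products of scalars. -/
structure IsSteinberg (g : Option A → Fin 5 → Fin 5 → G) : Prop where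
  rootCommute (a b : Option A) : RootCommute (g a) (g b)
  mul_none (a : Option A) : IsRootProd (g a) (g none) (g a)
  none_mul (a : Option A) : IsRootProd (g none) (g a) (g a)

/-- The elements which correspond to the elementary matrices `1 + (a₁ ⋯ aₙ) Eᵢⱼ`, for the word
`a₁ ⋯ aₙ` in the scalars. -/
noncomputable def wordRoot (g : Option A → Fin 5 → Fin 5 → G) (u : FreeMonoid A) :
    Fin 5 → Fin 5 → G :=
  u.toList.foldr (fun a => rootProd (g (some a))) (g none)

/-- A family `X` that can be multiplied from the left by the families of generators `g`. -/
structure IsSteinbergFamily (g : Option A → Fin 5 → Fin 5 → G) (X : Fin 5 → Fin 5 → G) : Prop where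
  none_mul : IsRootProd (g none) X X
  rootCommute (a : Option A) : RootCommute (g a) X
  rootCommute_self : RootCommute X X

namespace IsSteinberg

variable {g : Option A → Fin 5 → Fin 5 → G} (h : IsSteinberg g)
include h

theorem isRootProd_rootProd {X : Fin 5 → Fin 5 → G} (hX : IsSteinbergFamily g X) (a : Option A) :
    IsRootProd (g a) X (rootProd (g a) X) :=
  isRootProd_rootProd_of_unital (h.mul_none a) hX.none_mul (hX.rootCommute a) hX.rootCommute_self

theorem isSteinbergFamily_rootProd {X : Fin 5 → Fin 5 → G} (hX : IsSteinbergFamily g X)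
    (a : Option A) : IsSteinbergFamily g (rootProd (g a) X) := by
  have hprod := h.isRootProd_rootProd hX a
  have hg (b : Option A) : RootCommute (g b) (rootProd (g a) X) :=
    (h.rootCommute b a).of_isRootProd (hX.rootCommute b) hprod
  have hX' : RootCommute X (rootProd (g a) X) :=
    (hX.rootCommute a).symm.of_isRootProd hX.rootCommute_self hprod
  exact ⟨(h.none_mul a).assoc_left hprod hprod (hX.rootCommute none) (hg a) hX'.symm, hg,
    (hg a).symm.of_isRootProd hX'.symm hprod⟩

theorem isSteinbergFamily_wordRoot (u : FreeMonoid A) : IsSteinbergFamily g (wordRoot g u) := by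
  induction u using FreeMonoid.inductionOn' with
  | one => exact ⟨h.none_mul none, (h.rootCommute · none), h.rootCommute none none⟩
  | of_mul a u ih => exact h.isSteinbergFamily_rootProd ih (some a)

theorem isRootProd_wordRoot_of_mul (a : A) (u : FreeMonoid A) :
    IsRootProd (g (some a)) (wordRoot g u) (wordRoot g (.of a * u)) :=
  h.isRootProd_rootProd (h.isSteinbergFamily_wordRoot u) (some a)

theorem rootCommute_wordRoot (u v : FreeMonoid A) :
    RootCommute (wordRoot g u) (wordRoot g v) := by
  have hu := h.isSteinbergFamily_wordRoot u
  induction v using FreeMonoid.inductionOn' with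
  | one => exact (hu.rootCommute none).symm
  | of_mul a v ih =>
    exact (hu.rootCommute (some a)).symm.of_isRootProd ih (h.isRootProd_wordRoot_of_mul a v)

theorem isRootProd_wordRoot (u v : FreeMonoid A) :
    IsRootProd (wordRoot g u) (wordRoot g v) (wordRoot g (u * v)) := by
  induction u using FreeMonoid.inductionOn' with
  | one => exact (h.isSteinbergFamily_wordRoot v).none_mul
  | of_mul a u ih =>
    exact (h.isRootProd_wordRoot_of_mul a u).assoc_right ih (h.isRootProd_wordRoot_of_mul a (u * v))
      ((h.isSteinbergFamily_wordRoot v).rootCommute _) (h.rootCommute_wordRoot _ _)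
      (h.rootCommute_wordRoot _ _)

/-- The words that define the same elementary matrices are congruent. -/
def wordCon : Con (FreeMonoid A) where
  r u v := ∀ ⦃i j⦄, i ≠ j → wordRoot g u i j = wordRoot g v i j
  iseqv := ⟨fun _ _ _ _ => rfl, fun h _ _ hij => (h hij).symm,
    fun h h' _ _ hij => (h hij).trans (h' hij)⟩
  mul' {u u' v v'} hu hv i j hij := by
    obtain ⟨k, hik, hkj, -⟩ := exists_fin_five_ne i j i j
    rw [← h.isRootProd_wordRoot u v hik hkj hij, ← h.isRootProd_wordRoot u' v' hik hkj hij, hu hik,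
      hv hkj]

theorem wordRoot_mul_eq_one {u : FreeMonoid A} (hu : ∀ ⦃i j⦄, i ≠ j → wordRoot g u i j = 1)
    (v : FreeMonoid A) {i j : Fin 5} (hij : i ≠ j) : wordRoot g (u * v) i j = 1 := by
  obtain ⟨k, hik, hkj, -⟩ := exists_fin_five_ne i j i j
  rw [← h.isRootProd_wordRoot u v hik hkj hij, hu hik, commutatorElement_one_left]

theorem eq_one_of_none_eq_one {p q : Fin 5} (hpq : p ≠ q) (h₁ : g none p q = 1) (a : Option A)
    {i j : Fin 5} (hij : i ≠ j) : g a i j = 1 := by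
  have row {p q j : Fin 5} (hpq : p ≠ q) (hqj : q ≠ j) (hpj : p ≠ j) (h₁ : g none p q = 1)
      (a : Option A) : g a p j = 1 := by
    rw [← h.none_mul a hpq hqj hpj, h₁, commutatorElement_one_left]
  have column {i p q : Fin 5} (hip : i ≠ p) (hpq : p ≠ q) (hiq : i ≠ q) (h₁ : g none p q = 1)
      (a : Option A) : g a i q = 1 := by
    rw [← h.mul_none a hip hpq hiq, h₁, commutatorElement_one_right]
  obtain ⟨k, hpk, hkq, hik, hkj⟩ := exists_fin_five_ne p q i j
  have hpk' := row hpq hkq.symm hpk h₁ none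
  rcases eq_or_ne i p with rfl | hip
  · exact row hik hkj hij hpk' a
  · exact row hik hkj hij (column hip hpk hik hpk' none) a

end IsSteinberg

end Steinberg

section Translations

variable {B : Type*}

/-- The `𝔽₂`-valued functions on words of length at most `N` which are compatible with the
relations `r` and vanish on all words with the factor `z`. -/
def compatibleFunctions (N : ℕ) (r : FreeMonoid B → FreeMonoid B → Prop) (z : FreeMonoid B) :
    Submodule (ZMod 2) (FreeMonoid B → ZMod 2) where
  carrier := {F | (∀ x, N < x.length → F x = 0) ∧
    (∀ u v, r u v → ∀ p s, F (p * u * s) = F (p * v * s)) ∧ ∀ p s, F (p * z * s) = 0}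
  add_mem' := fun ⟨h₁, h₂, h₃⟩ ⟨h₁', h₂', h₃'⟩ => ⟨fun x hx => by simp [h₁ x hx, h₁' x hx],
    fun u v h p s => by simp [h₂ u v h, h₂' u v h], fun p s => by simp [h₃, h₃']⟩
  zero_mem' := by simp
  smul_mem' := fun c _ ⟨h₁, h₂, h₃⟩ => ⟨fun x hx => by simp [h₁ x hx],
    fun u v h p s => by simp [h₂ u v h], fun p s => by simp [h₃]⟩

variable {N : ℕ} {r : FreeMonoid B → FreeMonoid B → Prop} {z : FreeMonoid B}

instance [Finite B] : Finite (compatibleFunctions N r z) := by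
  have : Finite {x : FreeMonoid B // x.length ≤ N} := (List.finite_length_le B N).to_subtype
  refine Finite.of_injective (β := {x : FreeMonoid B // x.length ≤ N} → ZMod 2)
    (fun F x => F.1 x) fun F F' h => Subtype.ext (funext fun x => ?_)
  rcases le_or_gt x.length N with hx | hx
  · exact congrFun h ⟨x, hx⟩
  · rw [F.2.1 x hx, F'.2.1 x hx]

variable (N r z) in
/-- Words act on functions by right translations. -/
def translation : FreeMonoid B →* Module.End (ZMod 2) (compatibleFunctions N r z) where
  toFun u := (LinearMap.funLeft (ZMod 2) (ZMod 2) (· * u)).restrict fun F ⟨h₁, h₂, h₃⟩ =>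
    ⟨fun x hx => h₁ _ (hx.trans_le (by simp [FreeMonoid.length_mul])),
      fun l r h p s => by simpa only [LinearMap.funLeft_apply, mul_assoc] using h₂ l r h p (s * u),
      fun p s => by simpa only [LinearMap.funLeft_apply, mul_assoc] using h₃ p (s * u)⟩
  map_one' := by ext F x; exact congrArg F.1 (mul_one x)
  map_mul' u v := by ext F x; exact congrArg F.1 (mul_assoc x u v).symm

theorem translation_apply_one (u : FreeMonoid B) (F : compatibleFunctions N r z) :
    (translation N r z u F).1 1 = F.1 u :=
  congrArg F.1 (one_mul u)

theorem translation_eq_of_rel {u v : FreeMonoid B} (h : r u v) :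
    translation N r z u = translation N r z v := by
  ext F x
  change F.1 (x * u) = F.1 (x * v)
  simpa using F.2.2.1 u v h x 1

theorem translation_eq_zero : translation N r z z = 0 := by
  ext F x
  change F.1 (x * z) = 0
  simpa using F.2.2.2 x 1

end Translations

theorem exists_finite_representation_of_language {B : Type} [Finite B] {L : Set (FreeMonoid B)}
    (hL : L.Finite) {w : FreeMonoid B} (hw : w ∈ L) {r : FreeMonoid B → FreeMonoid B → Prop}
    (hr : ∀ u v, r u v → ∀ p s, p * u * s ∈ L ↔ p * v * s ∈ L) {z : FreeMonoid B}
    (hz : ∀ p s, p * z * s ∉ L) :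
    ∃ (R : Type) (_ : Ring R) (_ : Module (ZMod 2) R) (_ : Finite R) (ρ : FreeMonoid B →* R),
      (∀ u v, r u v → ρ u = ρ v) ∧ ρ z = 0 ∧ ρ w ≠ 0 := by
  classical
  obtain ⟨N, hN⟩ := (hL.image FreeMonoid.length).bddAbove
  let χ : compatibleFunctions N r z := ⟨fun x => if x ∈ L then 1 else 0,
    fun x hx => if_neg fun h => hx.not_ge (hN ⟨x, h, rfl⟩),
    fun u v h p s => by simp only [hr u v h], fun p s => if_neg (hz p s)⟩
  refine ⟨Module.End (ZMod 2) (compatibleFunctions N r z), inferInstance, inferInstance,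
    Finite.of_injective (fun f => ⇑f) DFunLike.coe_injective, translation N r z,
    fun _ _ => translation_eq_of_rel, translation_eq_zero, fun h => ?_⟩
  simpa [h, χ, hw] using translation_apply_one w χ

section Elementary

variable {R : Type*} [Ring R]

/-- The unit `1 + x`, for an element `x` of square zero. -/
def oneAddUnit (x : R) (h : x * x = 0) : Rˣ where
  val := 1 + x
  inv := 1 - x
  val_inv := by rw [add_mul, mul_sub, mul_sub, h]; simp
  inv_val := by rw [sub_mul, mul_add, mul_add, h]; simp

theorem oneAddUnit_eq_one_iff {x : R} {h : x * x = 0} : oneAddUnit x h = 1 ↔ x = 0 := by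
  simp [Units.ext_iff, oneAddUnit]

theorem oneAddUnit_sq [Module (ZMod 2) R] {x : R} (h : x * x = 0) : oneAddUnit x h ^ 2 = 1 := by
  ext
  change (1 + x) ^ 2 = 1
  rw [(Commute.one_left x).add_sq, sq x, h, one_pow, mul_one, two_mul, ZModModule.add_self,
    add_zero, add_zero]

variable {x y : R} {hx : x * x = 0} {hy : y * y = 0}

theorem commute_oneAddUnit (hxy : x * y = 0) (hyx : y * x = 0) :
    Commute (oneAddUnit x hx) (oneAddUnit y hy) := by
  ext
  change (1 + x) * (1 + y) = (1 + y) * (1 + x)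
  simp only [add_mul, mul_add, one_mul, mul_one, hxy, hyx]
  abel

theorem commutatorElement_oneAddUnit (hyx : y * x = 0) (hxy : x * y * (x * y) = 0) :
    ⁅oneAddUnit x hx, oneAddUnit y hy⁆ = oneAddUnit (x * y) hxy := by
  have hxyx : x * y * x = 0 := by rw [mul_assoc, hyx, mul_zero]
  have hxyy : x * y * y = 0 := by rw [mul_assoc, hy, mul_zero]
  rw [commutatorElement_def, mul_inv_eq_iff_eq_mul, mul_inv_eq_iff_eq_mul]
  ext
  change (1 + x) * (1 + y) = (1 + x * y) * (1 + y) * (1 + x)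
  simp only [add_mul, mul_add, one_mul, mul_one, hxyx, hxyy, hyx, zero_mul]
  abel

variable {n : Type*} [DecidableEq n] [Fintype n]

/-- The elementary matrix `1 + a Eᵢⱼ`, over a ring that need not be commutative; for `i = j` it is
replaced by `1`. -/
def elementary (i j : n) (a : R) : (Matrix n n R)ˣ :=
  if h : i ≠ j then
    oneAddUnit (Matrix.single i j a) (Matrix.single_mul_single_of_ne _ _ _ _ h.symm _)
  else 1

theorem elementary_self (i : n) (a : R) : elementary i i a = 1 :=
  dif_neg (not_not.2 rfl)

theorem elementary_eq_one_iff {i j : n} (hij : i ≠ j) {a : R} : elementary i j a = 1 ↔ a = 0 := by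
  rw [elementary, dif_pos hij, oneAddUnit_eq_one_iff]
  exact ⟨fun h => by simpa using congrFun₂ h i j, fun h => by rw [h, Matrix.single_zero]⟩

theorem orderOf_elementary [Module (ZMod 2) R] {i j : n} (hij : i ≠ j) {a : R} (ha : a ≠ 0) :
    orderOf (elementary i j a) = 2 := by
  refine orderOf_eq_prime ?_ (mt (elementary_eq_one_iff hij).1 ha)
  rw [elementary, dif_pos hij]
  exact oneAddUnit_sq _

theorem commute_elementary {i j p q : n} (hij : i ≠ j) (hpq : p ≠ q) (hjp : j ≠ p) (hiq : i ≠ q)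
    (a b : R) : Commute (elementary i j a) (elementary p q b) := by
  rw [elementary, elementary, dif_pos hij, dif_pos hpq]
  exact commute_oneAddUnit (Matrix.single_mul_single_of_ne _ _ _ _ hjp _)
    (Matrix.single_mul_single_of_ne _ _ _ _ hiq.symm _)

theorem commutatorElement_elementary {i k j : n} (hik : i ≠ k) (hkj : k ≠ j) (hij : i ≠ j)
    (a b : R) : ⁅elementary i k a, elementary k j b⁆ = elementary i j (a * b) := by
  rw [elementary, elementary, elementary, dif_pos hik, dif_pos hkj, dif_pos hij,
    commutatorElement_oneAddUnit (Matrix.single_mul_single_of_ne _ _ _ _ hij.symm _)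
      (by simp [hij.symm])]
  simp only [Matrix.single_mul_single_same]

end Elementary

section ElementaryRoots

variable {B R : Type*} [Ring R] (ρ : FreeMonoid B →* R)

/-- The elementary matrices `1 + ρ(a) Eᵢⱼ`, for the letters `a`, and `1 + Eᵢⱼ`. -/
def elementaryRoot (a : Option B) (i j : Fin 5) : (Matrix (Fin 5) (Fin 5) R)ˣ :=
  elementary i j (a.elim 1 fun b => ρ (.of b))

theorem isSteinberg_elementaryRoot : IsSteinberg (elementaryRoot ρ) where
  rootCommute _ _ _ _ _ _ hij hpq hjp hiq := commute_elementary hij hpq hjp hiq _ _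
  mul_none a _ _ _ hik hkj hij := by
    simp [elementaryRoot, commutatorElement_elementary hik hkj hij]
  none_mul a _ _ _ hik hkj hij := by
    simp [elementaryRoot, commutatorElement_elementary hik hkj hij]

theorem wordRoot_elementaryRoot (u : FreeMonoid B) {i j : Fin 5} (hij : i ≠ j) :
    wordRoot (elementaryRoot ρ) u i j = elementary i j (ρ u) := by
  induction u using FreeMonoid.inductionOn' generalizing i j with
  | one => rw [map_one]; rfl
  | of_mul a u ih =>
    obtain ⟨k, hik, hkj, -⟩ := exists_fin_five_ne i j i j
    rw [← (isSteinberg_elementaryRoot ρ).isRootProd_wordRoot_of_mul a u hik hkj hij, ih hkj,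
      elementaryRoot, commutatorElement_elementary hik hkj hij, map_mul]
    rfl

end ElementaryRoots

theorem exists_finite_isSteinberg {B : Type} [Finite B] {L : Set (FreeMonoid B)}
    (hL : L.Finite) {w : FreeMonoid B} (hw : w ∈ L) {r : FreeMonoid B → FreeMonoid B → Prop}
    (hr : ∀ u v, r u v → ∀ p s, p * u * s ∈ L ↔ p * v * s ∈ L) {z : FreeMonoid B}
    (hz : ∀ p s, p * z * s ∉ L) :
    ∃ (H : Type) (_ : Group H) (_ : Finite H) (g : Option B → Fin 5 → Fin 5 → H),
      IsSteinberg g ∧ (∀ a i, g a i i = 1) ∧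
      (∀ u v, r u v → ∀ ⦃i j⦄, i ≠ j → wordRoot g u i j = wordRoot g v i j) ∧
      ∀ ⦃i j⦄, i ≠ j → wordRoot g z i j = 1 ∧ orderOf (wordRoot g w i j) = 2 ∧
        orderOf (g none i j) = 2 := by
  obtain ⟨R, _, _, _, ρ, hρ, hρz, hρw⟩ := exists_finite_representation_of_language hL hw hr hz
  have : Nontrivial R := nontrivial_of_ne _ _ hρw
  refine ⟨(Matrix (Fin 5) (Fin 5) R)ˣ, inferInstance, inferInstance, elementaryRoot ρ,
    isSteinberg_elementaryRoot ρ, fun a i => elementary_self i _, fun u v huv i j hij => ?_,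
    fun i j hij => ?_⟩
  · rw [wordRoot_elementaryRoot ρ u hij, wordRoot_elementaryRoot ρ v hij, hρ u v huv]
  · rw [wordRoot_elementaryRoot ρ z hij, wordRoot_elementaryRoot ρ w hij]
    exact ⟨(elementary_eq_one_iff hij).2 hρz, orderOf_elementary hij hρw,
      orderOf_elementary hij one_ne_zero⟩

section Generators

open MulAction

theorem isPreprimitive_of_orbit_stabilizer {G α : Type*} [Group G] [MulAction G α] {a b : α}
    (h : ∀ x, x ≠ a → x ∈ orbit (stabilizer G a) b) {g : G} (hg : g • a ≠ a) :
    IsPreprimitive G α := by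
  have orbit_eq (x : α) : orbit G x = orbit G b := by
    have of_ne {x : α} (hx : x ≠ a) : orbit G x = orbit G b :=
      orbit_eq_iff.2 (orbit_submonoid_subset (stabilizer G a).toSubmonoid b (h x hx))
    rcases eq_or_ne x a with rfl | hx
    · exact (orbit_smul g x).symm.trans (of_ne hg)
    · exact of_ne hx
  have : IsPretransitive G α :=
    ⟨fun x y => orbit_eq_iff.1 ((orbit_eq y).trans (orbit_eq x).symm)⟩
  have : IsPretransitive (stabilizer G a) (SubMulAction.ofStabilizer G a) := by
    have mem_orbit (x y : SubMulAction.ofStabilizer G a) :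
        y.1 ∈ orbit (stabilizer G a) x.1 := by
      rw [orbit_eq_iff.2 (h x.1 x.2)]
      exact h y.1 y.2
    refine ⟨fun x y => ?_⟩
    obtain ⟨k, hk⟩ := mem_orbit x y
    exact ⟨k, Subtype.ext hk⟩
  exact isPreprimitive_of_is_two_pretransitive
    ((SubMulAction.ofStabilizer.isMultiplyPretransitive (a := a)).2
      (is_one_pretransitive_iff.2 this))

variable {ι : Type*} [Fintype ι] [DecidableEq ι]

/-- The rows `1` and `2` of `ZMod 3 × ι` together with the points of row `0` over `F`: the set
permuted by the generators of the alternating group constructed below. -/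
def padded (F : Finset ι) : Finset (ZMod 3 × ι) := {p | p.1 = 0 → p.2 ∈ F}

variable {F : Finset ι}

theorem mem_padded {p : ZMod 3 × ι} : p ∈ padded F ↔ (p.1 = 0 → p.2 ∈ F) := by
  simp [padded]

theorem card_padded (F : Finset ι) : (padded F).card = 2 * Fintype.card ι + F.card := by
  have split : padded F = {1, 2} ×ˢ Finset.univ ∪ {0} ×ˢ F := by
    ext ⟨x, i⟩
    have hx : x = 0 ∧ x ≠ 1 ∧ x ≠ 2 ∨ x ≠ 0 ∧ (x = 1 ∨ x = 2) := by decide +revert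
    simp only [mem_padded, Finset.mem_union, Finset.mem_product, Finset.mem_insert,
      Finset.mem_singleton, Finset.mem_univ, and_true]
    tauto
  rw [split, Finset.card_union_of_disjoint (Finset.disjoint_product.2 (.inl (by decide))),
    Finset.card_product, Finset.card_product, Finset.card_pair (by decide), Finset.card_univ,
    Finset.card_singleton, one_mul]

variable (F) in
/-- The involution of `padded F` interchanging the rows `1` and `2`. -/
def rowSwap : Equiv.Perm (padded F) :=
  Equiv.Perm.subtypePerm (Equiv.prodCongrLeft fun _ => Equiv.neg _) fun _ => by simp [mem_padded]

variable (F) in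
/-- The permutation of `padded F` acting as `t` on row `1` and as `t ^ 2` on row `2`. -/
def rowPerm (t : Equiv.Perm ι) : Equiv.Perm (padded F) :=
  Equiv.Perm.subtypePerm (Equiv.prodCongrRight fun x : ZMod 3 => t ^ x.val) fun ⟨x, i⟩ => by
    rcases eq_or_ne x 0 with rfl | hx <;> simp [mem_padded, *]

/-- The permutation of `padded F` rotating the columns over `P`. -/
def columnPerm (P : Finset ι) (hP : P ⊆ F) : Equiv.Perm (padded F) :=
  Equiv.Perm.subtypePerm (Equiv.prodCongrLeft fun i => Equiv.addRight (if i ∈ P then 1 else 0))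
    fun ⟨x, i⟩ => by
      by_cases hi : i ∈ P
      · simp [mem_padded, hP hi]
      · simp [mem_padded, hi]

theorem coe_rowSwap_apply (p : padded F) : (rowSwap F p : ZMod 3 × ι) = (-p.1.1, p.1.2) := rfl

theorem coe_rowPerm_apply (t : Equiv.Perm ι) (p : padded F) :
    (rowPerm F t p : ZMod 3 × ι) = (p.1.1, (t ^ p.1.1.val) p.1.2) := rfl

theorem coe_columnPerm_apply (P : Finset ι) (hP : P ⊆ F) (p : padded F) :
    (columnPerm P hP p : ZMod 3 × ι) = (p.1.1 + if p.1.2 ∈ P then 1 else 0, p.1.2) := rfl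

theorem support_rowSwap : (rowSwap F).support = ({p | p.1.1 ≠ 0} : Finset (padded F)) := by
  have neg_ne_iff (x : ZMod 3) : -x ≠ x ↔ x ≠ 0 := by decide +revert
  ext p
  simp [Equiv.Perm.mem_support, Subtype.ext_iff, Prod.ext_iff, coe_rowSwap_apply, neg_ne_iff]

theorem card_support_rowSwap : (rowSwap F).support.card = 2 * Fintype.card ι := by
  rw [← Finset.card_map (Embedding.subtype _)]
  have : (rowSwap F).support.map (Embedding.subtype _) = padded ∅ := by
    ext p
    simp +contextual [support_rowSwap, mem_padded]
  rw [this, card_padded, Finset.card_empty, add_zero]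

theorem orderOf_rowSwap [Nonempty ι] : orderOf (rowSwap F) = 2 := by
  refine orderOf_eq_prime ?_ fun h => ?_
  · ext1 p
    simp [pow_two, Subtype.ext_iff, coe_rowSwap_apply]
  · simpa [h, Fintype.card_ne_zero] using card_support_rowSwap (F := F)

theorem rowPerm_pow_three {t : Equiv.Perm ι} (ht : t ^ 3 = 1) : rowPerm F t ^ 3 = 1 := by
  ext1 p
  refine Subtype.ext (Prod.ext rfl ?_)
  calc ((t ^ p.1.1.val) ^ 3) p.1.2 = p.1.2 := by rw [pow_right_comm, ht, one_pow]; rfl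

theorem rowSwap_mul_rowPerm {t : Equiv.Perm ι} (ht : t ^ 3 = 1) :
    rowSwap F * rowPerm F t = rowPerm F t ^ 2 * rowSwap F := by
  have pow_eq (x : ZMod 3) : t ^ x.val = (t ^ (-x).val) ^ 2 := by
    fin_cases x
    · rfl
    · change t ^ 1 = (t ^ 2) ^ 2
      rw [← pow_mul, pow_succ t 3, ht, one_mul, pow_one]
    · rfl
  ext1 p
  exact Subtype.ext (Prod.ext rfl (congrArg (fun s : Equiv.Perm ι => s p.1.2) (pow_eq p.1.1)))

theorem columnPerm_pow_three (P : Finset ι) (hP : P ⊆ F) : columnPerm P hP ^ 3 = 1 := by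
  have add_three (x c : ZMod 3) : x + c + c + c = x := by decide +revert
  ext1 p
  exact Subtype.ext (Prod.ext (add_three _ _) rfl)

theorem rowSwap_mul_columnPerm (P : Finset ι) (hP : P ⊆ F) :
    rowSwap F * columnPerm P hP = columnPerm P hP ^ 2 * rowSwap F := by
  have neg_add (x c : ZMod 3) : -(x + c) = -x + c + c := by decide +revert
  ext1 p
  exact Subtype.ext (Prod.ext (neg_add _ _) rfl)

theorem isThreeCycle_columnPerm_singleton {r : ι} (hr : {r} ⊆ F) :
    (columnPerm {r} hr).IsThreeCycle := by
  have rF : r ∈ F := Finset.singleton_subset_iff.1 hr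
  rw [← card_support_eq_three_iff]
  have : (columnPerm {r} hr).support.map (Embedding.subtype _) = Finset.univ ×ˢ {r} := by
    ext ⟨x, i⟩
    rcases eq_or_ne i r with rfl | hi
    · simp [Subtype.ext_iff, coe_columnPerm_apply, mem_padded, rF]
    · simp [Subtype.ext_iff, coe_columnPerm_apply, hi, hi.symm]
  rw [← Finset.card_map (Embedding.subtype _), this, Finset.card_product, Finset.card_univ,
    ZMod.card, Finset.card_singleton]

theorem orbit_stabilizer_apply {α : Type*} {K : Subgroup (Equiv.Perm α)} {a : α}
    {g : Equiv.Perm α} (hg : g ∈ K) (ha : g a = a) (x : α) :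
    orbit (stabilizer K a) (g x) = orbit (stabilizer K a) x :=
  orbit_smul (⟨⟨g, hg⟩, ha⟩ : stabilizer K a) x

variable {K : Subgroup (Equiv.Perm (padded F))} {a : padded F}

theorem orbit_stabilizer_row {T : Set (Equiv.Perm ι)} (hT : ∀ t ∈ T, t ^ 3 = 1)
    (hK : ∀ t ∈ T, rowPerm F t ∈ K) (ha : a.1.1 = 0) {x : ZMod 3} (hx : x ≠ 0)
    {g : Equiv.Perm ι} (hg : g ∈ Subgroup.closure T) (i : ι) :
    orbit (stabilizer K a) (⟨(x, g i), by simp [mem_padded, hx]⟩ : padded F) =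
      orbit (stabilizer K a) ⟨(x, i), by simp [mem_padded, hx]⟩ := by
  induction hg using Subgroup.closure_induction generalizing i with
  | mem t ht =>
    have rowPerm_apply : rowPerm F t a = a :=
      Subtype.ext (Prod.ext rfl (by rw [coe_rowPerm_apply, ha]; rfl))
    have orbit_rowPerm := orbit_stabilizer_apply (hK t ht) rowPerm_apply
    obtain rfl | rfl : x = 1 ∨ x = 2 := by decide +revert
    · exact orbit_rowPerm ⟨(1, i), _⟩
    · have : t i = ((t ^ 2) ^ 2) i := by
        rw [← pow_mul, pow_succ t 3, hT t ht, one_mul]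
      simp only [this]
      exact (orbit_rowPerm _).trans (orbit_rowPerm ⟨(2, i), _⟩)
  | one => rfl
  | mul g h _ _ ihg ihh => exact (ihg (h i)).trans (ihh i)
  | inv g _ ih => simpa using (ih (g⁻¹ i)).symm

theorem orbit_stabilizer_column {P : Finset ι} {hP : P ⊆ F} (hK : columnPerm P hP ∈ K)
    (ha : a.1.2 ∉ P) {i : ι} (hi : i ∈ P) (x : ZMod 3) :
    orbit (stabilizer K a) (⟨(x + 1, i), mem_padded.2 fun _ => hP hi⟩ : padded F) =
      orbit (stabilizer K a) ⟨(x, i), mem_padded.2 fun _ => hP hi⟩ := by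
  have columnPerm_apply : columnPerm P hP ⟨(x, i), mem_padded.2 fun _ => hP hi⟩ =
      ⟨(x + 1, i), mem_padded.2 fun _ => hP hi⟩ :=
    Subtype.ext (Prod.ext (by simp [coe_columnPerm_apply, if_pos hi]) rfl)
  rw [← columnPerm_apply]
  exact orbit_stabilizer_apply hK
    (Subtype.ext (Prod.ext (by simp [coe_columnPerm_apply, if_neg ha]) rfl)) _

theorem alternatingGroup_le_of_rowPerm_of_columnPerm {T : Set (Equiv.Perm ι)}
    (hT : ∀ t ∈ T, t ^ 3 = 1) [IsPretransitive (Subgroup.closure T) ι]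
    {r r' : ι} (hr : r ∈ F) (hr' : r' ∈ F.erase r)
    (hrow : ∀ t ∈ T, rowPerm F t ∈ K) (hcol : columnPerm (F.erase r) (F.erase_subset r) ∈ K)
    (hr₃ : columnPerm {r} (Finset.singleton_subset_iff.2 hr) ∈ K) :
    alternatingGroup (padded F) ≤ K := by
  set a : padded F := ⟨(0, r), mem_padded.2 fun _ => hr⟩
  have orbit_row {x : ZMod 3} (hx : x ≠ 0) (i : ι) :
      orbit (stabilizer K a) (⟨(x, i), by simp [mem_padded, hx]⟩ : padded F) =
        orbit (stabilizer K a) ⟨(x, r'), by simp [mem_padded, hx]⟩ := by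
    obtain ⟨g, rfl⟩ := exists_smul_eq (Subgroup.closure T) r' i
    exact orbit_stabilizer_row hT hrow rfl hx g.2 r'
  have orbit_column {i : ι} (hi : i ∈ F.erase r) (x : ZMod 3) :=
    orbit_stabilizer_column (a := a) hcol (Finset.notMem_erase r F) hi x
  have hK : IsPreprimitive K (padded F) := by
    refine isPreprimitive_of_orbit_stabilizer (a := a) (b := ⟨(1, r'), by simp [mem_padded]⟩)
      (fun ⟨⟨x, i⟩, h⟩ hne => orbit_eq_iff.1 ?_)
      (g := ⟨columnPerm {r} (Finset.singleton_subset_iff.2 hr), hr₃⟩) fun h => ?_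
    · obtain rfl | rfl | rfl : x = 0 ∨ x = 1 ∨ x = 2 := by
        clear h hne
        decide +revert
      · have hi : i ∈ F.erase r :=
          Finset.mem_erase.2 ⟨fun hi => hne (Subtype.ext (Prod.ext rfl hi)), mem_padded.1 h rfl⟩
        exact (orbit_column hi 0).symm.trans (orbit_row (x := 0 + 1) (by decide) i)
      · exact orbit_row (by decide) i
      · exact (orbit_row (by decide) i).trans (orbit_column hr' 1)
    · simpa [coe_columnPerm_apply, a] using congrArg (fun p : padded F => p.1.1) h
  exact Equiv.Perm.alternatingGroup_le_of_isPreprimitive_of_isThreeCycle_mem hK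
    (isThreeCycle_columnPerm_singleton _) hr₃

theorem exists_isPretransitive_closure (M : ℕ) [NeZero M] :
    ∃ T : Fin 2 → Equiv.Perm (ZMod M × ZMod 3), (∀ k, T k ^ 3 = 1) ∧
      IsPretransitive (Subgroup.closure (Set.range T)) (ZMod M × ZMod 3) := by
  set t : Equiv.Perm (ZMod M × ZMod 3) := Equiv.prodCongrRight fun _ => Equiv.addRight 1
  set s : Equiv.Perm (ZMod M × ZMod 3) :=
    Equiv.prodCongrLeft fun x => Equiv.addRight (if x = 0 then 1 else 0)
  have t_pow_three : t ^ 3 = 1 := by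
    ext1 p
    have add_three (x : ZMod 3) : x + 1 + 1 + 1 = x := by decide +revert
    exact Prod.ext rfl (add_three p.2)
  set K := Subgroup.closure (Set.range ![t, s * t * s⁻¹])
  have orbit_apply {g} (hg : g ∈ Set.range ![t, s * t * s⁻¹]) (p : ZMod M × ZMod 3) :
      orbit K (g p) = orbit K p := orbit_smul (⟨g, Subgroup.subset_closure hg⟩ : K) p
  have orbit_fiber (k : ZMod M) (x : ZMod 3) : orbit K (k, x) = orbit K (k, 0) := by
    have h (x : ZMod 3) : orbit K (k, x + 1) = orbit K (k, x) := orbit_apply ⟨0, rfl⟩ (k, x)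
    obtain rfl | rfl | rfl : x = 0 ∨ x = 1 ∨ x = 2 := by decide +revert
    · rfl
    · exact h 0
    · exact (h 1).trans (h 0)
  have orbit_base (k : ZMod M) : orbit K (k, (0 : ZMod 3)) = orbit K (0, (0 : ZMod 3)) := by
    rw [← ZMod.natCast_zmod_val k]
    induction k.val with
    | zero => rw [Nat.cast_zero]
    | succ n ih =>
      have conj_apply : (s * t * s⁻¹) (s ((n : ZMod M), 2)) = s (t (n, 2)) := by
        simp only [Equiv.Perm.mul_apply, Equiv.Perm.inv_def, Equiv.symm_apply_apply]
      have s_apply_two : s (n, 2) = ((n : ZMod M), (2 : ZMod 3)) :=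
        Prod.ext (by simp [s, show (2 : ZMod 3) ≠ 0 by decide]) rfl
      have s_t_apply_two : s (t (n, 2)) = (((n + 1 : ℕ) : ZMod M), (0 : ZMod 3)) :=
        Prod.ext (by simp [s, t, show (2 : ZMod 3) + 1 = 0 by decide]) rfl
      rw [← ih, ← s_t_apply_two, ← conj_apply, orbit_apply (g := s * t * s⁻¹) ⟨1, rfl⟩, s_apply_two,
        orbit_fiber]
  have orbit_eq (p : ZMod M × ZMod 3) : orbit K p = orbit K 0 :=
    (orbit_fiber p.1 p.2).trans (orbit_base p.1)
  refine ⟨![t, s * t * s⁻¹], ?_,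
    ⟨fun p q => orbit_eq_iff.1 ((orbit_eq q).trans (orbit_eq p).symm)⟩⟩
  simp [Fin.forall_fin_two, t_pow_three]

theorem mem_alternatingGroup_of_pow_three {α : Type*} [Fintype α] [DecidableEq α]
    {σ : Equiv.Perm α} (h : σ ^ 3 = 1) : σ ∈ alternatingGroup α := by
  rw [Equiv.Perm.mem_alternatingGroup, ← map_one (Equiv.Perm.sign (α := α)), ← h, map_pow, pow_succ,
    Int.units_sq, one_mul]

theorem exists_alternatingGroup_padded_generators (M : ℕ) [NeZero M]
    (F : Finset (ZMod M × ZMod 3)) (hF : 1 < F.card) :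
    ∃ y : Fin 4 → alternatingGroup (padded F), Subgroup.closure (Set.range y) = ⊤ ∧
      ∀ k, rowSwap F * y k = (y k : Equiv.Perm (padded F)) ^ 2 * rowSwap F := by
  obtain ⟨T, T_pow_three, _⟩ := exists_isPretransitive_closure M
  obtain ⟨r, hr, r', hr', hne⟩ := Finset.one_lt_card.1 hF
  have hr₁ : {r} ⊆ F := Finset.singleton_subset_iff.2 hr
  let y : Fin 4 → Equiv.Perm (padded F) := ![rowPerm F (T 0), rowPerm F (T 1),
    columnPerm (F.erase r) (F.erase_subset r), columnPerm {r} hr₁]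
  have y_pow_three (k) : y k ^ 3 = 1 := by
    fin_cases k
    · exact rowPerm_pow_three (T_pow_three 0)
    · exact rowPerm_pow_three (T_pow_three 1)
    · exact columnPerm_pow_three _ (F.erase_subset r)
    · exact columnPerm_pow_three _ hr₁
  have rowSwap_mul (k) : rowSwap F * y k = y k ^ 2 * rowSwap F := by
    fin_cases k
    · exact rowSwap_mul_rowPerm (T_pow_three 0)
    · exact rowSwap_mul_rowPerm (T_pow_three 1)
    · exact rowSwap_mul_columnPerm _ (F.erase_subset r)
    · exact rowSwap_mul_columnPerm _ hr₁
  let y' (k : Fin 4) : alternatingGroup (padded F) :=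
    ⟨y k, mem_alternatingGroup_of_pow_three (y_pow_three k)⟩
  have mem_map (k) : y k ∈ (Subgroup.closure (Set.range y')).map (alternatingGroup _).subtype :=
    ⟨y' k, Subgroup.subset_closure ⟨k, rfl⟩, rfl⟩
  have le_map := alternatingGroup_le_of_rowPerm_of_columnPerm (T := Set.range T)
    (Set.forall_mem_range.2 T_pow_three) hr (Finset.mem_erase.2 ⟨hne.symm, hr'⟩)
    (Set.forall_mem_range.2 (Fin.forall_fin_two.2 ⟨mem_map 0, mem_map 1⟩)) (mem_map 2) (mem_map 3)
  refine ⟨y', (Subgroup.map_subtype_le_map_subtype.1 ?_ : ⊤ ≤ _).antisymm' le_top, rowSwap_mul⟩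
  rwa [← MonoidHom.range_eq_map, Subgroup.range_subtype]

theorem cycleType_eq_of_orderOf_prime {α β : Type*} [Fintype α] [DecidableEq α] [Fintype β]
    [DecidableEq β] {p : ℕ} (hp : p.Prime) {σ : Equiv.Perm α} {τ : Equiv.Perm β}
    (hσ : orderOf σ = p) (hτ : orderOf τ = p) (h : σ.support.card = τ.support.card) :
    σ.cycleType = τ.cycleType := by
  obtain ⟨m, hm⟩ := Equiv.Perm.cycleType_prime_order (hσ.symm ▸ hp)
  obtain ⟨n, hn⟩ := Equiv.Perm.cycleType_prime_order (hτ.symm ▸ hp)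
  rw [hσ] at hm
  rw [hτ] at hn
  rw [← Equiv.Perm.sum_cycleType, ← Equiv.Perm.sum_cycleType, hm, hn, Multiset.sum_replicate,
    Multiset.sum_replicate, smul_eq_mul, smul_eq_mul] at h
  rw [hm, hn, Nat.eq_of_mul_eq_mul_right hp.pos h]

theorem exists_permCongr_eq_of_cycleType_eq {α β : Type*} [Fintype α] [DecidableEq α] [Fintype β]
    [DecidableEq β] (hαβ : Fintype.card α = Fintype.card β) {σ : Equiv.Perm α} {τ : Equiv.Perm β}
    (h : σ.cycleType = τ.cycleType) : ∃ ε : α ≃ β, ε.permCongr σ = τ := by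
  let ε := Fintype.equivOfCardEq hαβ
  have : (ε.permCongr σ).cycleType = σ.cycleType := by
    let ε' : α ≃ {_b : β // True} := ε.trans (Equiv.subtypeUnivEquiv fun _ => trivial).symm
    have permCongr_eq : ε.permCongr σ = σ.extendDomain ε' := by
      ext b
      exact (Equiv.Perm.extendDomain_apply_subtype σ ε' trivial).symm
    rw [permCongr_eq, Equiv.Perm.cycleType_extendDomain]
  obtain ⟨π, hπ⟩ := isConj_iff.1 (Equiv.Perm.isConj_iff_cycleType_eq.2 (this.trans h))
  exact ⟨ε.trans π, by rw [← hπ]; rfl⟩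

end Generators

section Embedding

theorem exists_hom_alternatingGroup {L α : Type*} [Group L] [Fintype L] [Fintype α]
    [DecidableEq α] (c : ℕ) (h : 2 * c * Fintype.card L ≤ Fintype.card α) :
    ∃ φ : L →* alternatingGroup α, ∀ l, l ≠ 1 →
      (φ l : Equiv.Perm α).support.card = 2 * c * Fintype.card L := by
  classical
  obtain ⟨s, -, hs⟩ := Finset.exists_subset_card_eq (s := (Finset.univ : Finset α)) h
  let regular : L →* Equiv.Perm (Fin (2 * c) × L) :=
    { toFun := fun l => Equiv.prodCongrRight fun _ => Equiv.mulLeft l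
      map_one' := Equiv.ext fun x => Prod.ext rfl (one_mul x.2)
      map_mul' := fun a b => Equiv.ext fun x => Prod.ext rfl (mul_assoc a b x.2) }
  have sign_regular (l : L) : Equiv.Perm.sign (regular l) = 1 :=
    by
    refine (Equiv.Perm.sign_prodCongrRight fun _ : Fin (2 * c) => Equiv.mulLeft l).trans ?_
    rw [Finset.prod_const, Finset.card_univ, Fintype.card_fin, pow_mul, Int.units_sq, one_pow]
  have support_regular {l : L} (hl : l ≠ 1) : (regular l).support = Finset.univ := by
    ext x
    simp [regular, Prod.ext_iff, hl]
  let ε : Fin (2 * c) × L ≃ {a // a ∈ s} := Fintype.equivOfCardEq (by simp [hs])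
  refine ⟨((Equiv.Perm.extendDomainHom ε).comp regular).codRestrict _ fun l =>
    Equiv.Perm.mem_alternatingGroup.2 ((Equiv.Perm.sign_extendDomain _ ε).trans (sign_regular l)),
    fun l hl => (Equiv.Perm.card_support_extend_domain ε).trans ?_⟩
  rw [support_regular hl]
  simp

theorem exists_alternatingGroup_generators {α : Type*} [Fintype α] [DecidableEq α] {M : ℕ}
    (hα : 6 * M + 2 ≤ Fintype.card α) (hα' : Fintype.card α ≤ 9 * M) {τ : alternatingGroup α}
    (hτ : orderOf τ = 2) (h : (τ : Equiv.Perm α).support.card = 6 * M) :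
    ∃ y : Fin 4 → alternatingGroup α, Subgroup.closure (Set.range y) = ⊤ ∧
      ∀ k, τ * y k = y k ^ 2 * τ := by
  have : NeZero M := ⟨by omega⟩
  have card_rows : Fintype.card (ZMod M × ZMod 3) = 3 * M := by
    rw [Fintype.card_prod, ZMod.card, ZMod.card, mul_comm]
  obtain ⟨F, -, hF⟩ := Finset.exists_subset_card_eq (s := (Finset.univ : Finset (ZMod M × ZMod 3)))
    (n := Fintype.card α - 6 * M) (by rw [Finset.card_univ, card_rows]; omega)
  obtain ⟨y, closure_y, swap_mul⟩ := exists_alternatingGroup_padded_generators M F (by omega)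
  obtain ⟨ε, hε⟩ : ∃ ε : padded F ≃ α, ε.permCongr (rowSwap F) = τ :=
    exists_permCongr_eq_of_cycleType_eq
      (by rw [Fintype.card_coe, card_padded, card_rows]; omega)
      (cycleType_eq_of_orderOf_prime Nat.prime_two orderOf_rowSwap
        ((Subgroup.orderOf_coe τ).trans hτ) (by rw [card_support_rowSwap, card_rows, h]; ring))
  refine ⟨fun k => ε.altCongrHom (y k), ?_, fun k => Subtype.ext ?_⟩
  · have := congrArg (Subgroup.map ε.altCongrHom.toMonoidHom) closure_y
    rw [MonoidHom.map_closure, ← Set.range_comp] at this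
    exact this.trans (Subgroup.map_top_of_surjective _ ε.altCongrHom.surjective)
  · have := congrArg ε.permCongrHom (swap_mul k)
    rwa [map_mul, map_mul, map_pow, show ε.permCongrHom (rowSwap F) = τ from hε] at this

theorem exists_hom_alternatingGroup_generators {L : Type*} [Group L] [Finite L] {w e : L}
    (hw : orderOf w = 2) (he : orderOf e = 2) :
    ∃ m₀, ∀ m ≥ m₀, ∃ (φ : L →* alternatingGroup (Fin m)) (y : Fin 4 → alternatingGroup (Fin m))
      (h : alternatingGroup (Fin m)), Subgroup.closure (Set.range y) = ⊤ ∧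
      (∀ k, φ w * y k = y k ^ 2 * φ w) ∧ h * φ w = φ e * h := by
  have := Fintype.ofFinite L
  obtain ⟨d, hd⟩ : ∃ d, Fintype.card L = d := ⟨_, rfl⟩
  have hd₀ : 0 < d := hd ▸ Fintype.card_pos
  refine ⟨20 * d + 20, fun m hm => ?_⟩
  obtain ⟨c, hc, hc'⟩ : ∃ c, 6 * (c * d) + 2 ≤ m ∧ m ≤ 6 * (c * d) + 6 * d + 1 := by
    have := Nat.div_add_mod (m - 2) (6 * d)
    have := Nat.mod_lt (m - 2) (show 0 < 6 * d by omega)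
    have : 6 * d * ((m - 2) / (6 * d)) = 6 * ((m - 2) / (6 * d) * d) := by ring
    exact ⟨(m - 2) / (6 * d), by omega, by omega⟩
  have hcd : 2 * (3 * c) * d = 6 * (c * d) := by ring
  obtain ⟨φ, hφ⟩ := exists_hom_alternatingGroup (L := L) (α := Fin m) (3 * c)
    (by rw [Fintype.card_fin, hd]; omega)
  rw [hd, hcd] at hφ
  have card_support {l : L} (hl : orderOf l = 2) :
      (φ l : Equiv.Perm (Fin m)).support.card = 6 * (c * d) :=
    hφ l fun h => by simp [h] at hl
  have orderOf_map {l : L} (hl : orderOf l = 2) : orderOf (φ l) = 2 := by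
    refine orderOf_eq_prime (by rw [← map_pow, ← hl, pow_orderOf_eq_one, map_one]) fun h => ?_
    have := card_support hl
    rw [h, OneMemClass.coe_one, Equiv.Perm.support_one, Finset.card_empty] at this
    omega
  obtain ⟨y, closure_y, swap_mul⟩ := exists_alternatingGroup_generators (M := c * d)
    (by rw [Fintype.card_fin]; omega) (by rw [Fintype.card_fin]; omega) (orderOf_map hw)
    (card_support hw)
  have conj : IsConj (φ w : Equiv.Perm (Fin m)) (φ e) :=
    Equiv.Perm.isConj_iff_cycleType_eq.2 <| cycleType_eq_of_orderOf_prime Nat.prime_two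
      ((Subgroup.orderOf_coe _).trans (orderOf_map hw))
      ((Subgroup.orderOf_coe _).trans (orderOf_map he))
      ((card_support hw).trans (card_support he).symm)
  obtain ⟨h, hh⟩ := isConj_iff.1 <| alternatingGroup.isConj_of conj <| by
    rw [card_support hw, Fintype.card_fin]
    omega
  exact ⟨φ, y, h, closure_y, swap_mul, mul_inv_eq_iff_eq_mul.1 hh⟩

end Embedding

section Relations

variable {A G H : Type*} [Group G] [Group H]

/-- The pairs of elements which have to be equal for `g` to consist of elementary matrices over a
ring generated by the alphabet `A`, in which the words related by `r` are equal and the word `z`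
is zero. -/
inductive RootRelation (r : FreeMonoid A → FreeMonoid A → Prop) (z : FreeMonoid A)
    (g : Option A → Fin 5 → Fin 5 → G) : G → G → Prop
  | commute (a b : Option A) {i j p q : Fin 5} (hij : i ≠ j) (hpq : p ≠ q) (hjp : j ≠ p)
    (hiq : i ≠ q) : RootRelation r z g ⁅g a i j, g b p q⁆ 1
  | mul_none (a : Option A) {i k j : Fin 5} (hik : i ≠ k) (hkj : k ≠ j) (hij : i ≠ j) :
    RootRelation r z g ⁅g a i k, g none k j⁆ (g a i j)
  | none_mul (a : Option A) {i k j : Fin 5} (hik : i ≠ k) (hkj : k ≠ j) (hij : i ≠ j) :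
    RootRelation r z g ⁅g none i k, g a k j⁆ (g a i j)
  | diagonal (a : Option A) (i : Fin 5) : RootRelation r z g (g a i i) 1
  | rule {u v : FreeMonoid A} (h : r u v) {i j : Fin 5} (hij : i ≠ j) :
    RootRelation r z g (wordRoot g u i j) (wordRoot g v i j)
  | zero {i j : Fin 5} (hij : i ≠ j) : RootRelation r z g (wordRoot g z i j) 1

theorem map_wordRoot (φ : G →* H) (g : Option A → Fin 5 → Fin 5 → G) (u : FreeMonoid A)
    (i j : Fin 5) : φ (wordRoot g u i j) = wordRoot (fun a i j => φ (g a i j)) u i j := by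
  induction u using FreeMonoid.inductionOn' generalizing i j with
  | one => rfl
  | of_mul a u ih => exact (map_commutatorElement φ _ _).trans (congrArg _ (ih _ _))

namespace RootRelation

variable {r : FreeMonoid A → FreeMonoid A → Prop} {z : FreeMonoid A}
  {g : Option A → Fin 5 → Fin 5 → G}

theorem map (φ : G →* H) {x y : G} (h : RootRelation r z g x y) :
    RootRelation r z (fun a i j => φ (g a i j)) (φ x) (φ y) := by
  cases h <;> simp only [map_commutatorElement, map_one, map_wordRoot] <;> constructor <;>
    assumption

theorem exists_of_map (φ : G →* H) {x y : H}
    (h : RootRelation r z (fun a i j => φ (g a i j)) x y) :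
    ∃ x' y', RootRelation r z g x' y' ∧ φ x' = x ∧ φ y' = y := by
  cases h with
  | commute a b hij hpq hjp hiq =>
    exact ⟨_, _, .commute a b hij hpq hjp hiq, map_commutatorElement φ _ _, map_one φ⟩
  | mul_none a hik hkj hij =>
    exact ⟨_, _, .mul_none a hik hkj hij, map_commutatorElement φ _ _, rfl⟩
  | none_mul a hik hkj hij =>
    exact ⟨_, _, .none_mul a hik hkj hij, map_commutatorElement φ _ _, rfl⟩
  | diagonal a i => exact ⟨_, _, .diagonal a i, rfl, map_one φ⟩
  | rule h hij => exact ⟨_, _, .rule h hij, map_wordRoot .., map_wordRoot ..⟩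
  | zero hij => exact ⟨_, _, .zero hij, map_wordRoot .., map_one φ⟩

theorem isSteinberg (h : ∀ x y, RootRelation r z g x y → x = y) : IsSteinberg g where
  rootCommute a b _ _ _ _ hij hpq hjp hiq :=
    commutatorElement_eq_one_iff_commute.1 (h _ _ (.commute a b hij hpq hjp hiq))
  mul_none a _ _ _ hik hkj hij := h _ _ (.mul_none a hik hkj hij)
  none_mul a _ _ _ hik hkj hij := h _ _ (.none_mul a hik hkj hij)

theorem finite [Finite A] (hr : {p : FreeMonoid A × FreeMonoid A | r p.1 p.2}.Finite) :
    {p : G × G | RootRelation r z g p.1 p.2}.Finite := by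
  have := hr.to_subtype
  let commute (p : (Option A × Option A) × (Fin 5 × Fin 5) × Fin 5 × Fin 5) : G × G :=
    (⁅g p.1.1 p.2.1.1 p.2.1.2, g p.1.2 p.2.2.1 p.2.2.2⁆, 1)
  let mul_none (p : Option A × Fin 5 × Fin 5 × Fin 5) : G × G :=
    (⁅g p.1 p.2.1 p.2.2.1, g none p.2.2.1 p.2.2.2⁆, g p.1 p.2.1 p.2.2.2)
  let none_mul (p : Option A × Fin 5 × Fin 5 × Fin 5) : G × G :=
    (⁅g none p.2.1 p.2.2.1, g p.1 p.2.2.1 p.2.2.2⁆, g p.1 p.2.1 p.2.2.2)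
  let diagonal (p : Option A × Fin 5) : G × G := (g p.1 p.2 p.2, 1)
  let rule (p : {p : FreeMonoid A × FreeMonoid A | r p.1 p.2} × Fin 5 × Fin 5) : G × G :=
    (wordRoot g p.1.1.1 p.2.1 p.2.2, wordRoot g p.1.1.2 p.2.1 p.2.2)
  let zero (p : Fin 5 × Fin 5) : G × G := (wordRoot g z p.1 p.2, 1)
  refine (Set.finite_range (Sum.elim commute <| Sum.elim mul_none <| Sum.elim none_mul <|
    Sum.elim diagonal <| Sum.elim rule zero)).subset ?_
  rintro ⟨_, _⟩ (@⟨a, b, i, j, p, q⟩ | @⟨a, i, k, j⟩ | @⟨a, i, k, j⟩ | ⟨a, i⟩ | @⟨u, v, h, i, j⟩ |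
    @⟨i, j⟩)
  · exact ⟨.inl ((a, b), (i, j), p, q), rfl⟩
  · exact ⟨.inr (.inl (a, i, k, j)), rfl⟩
  · exact ⟨.inr (.inr (.inl (a, i, k, j))), rfl⟩
  · exact ⟨.inr (.inr (.inr (.inl (a, i)))), rfl⟩
  · exact ⟨.inr (.inr (.inr (.inr (.inl (⟨(u, v), h⟩, i, j))))), rfl⟩
  · exact ⟨.inr (.inr (.inr (.inr (.inr (i, j))))), rfl⟩

end RootRelation

end Relations

section Presentation

variable {A : Type*}

/-- The generators of the presented groups: the elements `1 + a Eᵢⱼ`, the matrix of the input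
word, four elements that generate the alternating quotients, and an element that conjugates the
matrix of the input word to that of `1`. -/
inductive Generator (A : Type*)
  | root (a : Option A) (i j : Fin 5)
  | input
  | alternating (k : Fin 4)
  | conjugator

instance [Finite A] : Finite (Generator A) :=
  .of_surjective (Sum.elim (fun p : Option A × Fin 5 × Fin 5 => .root p.1 p.2.1 p.2.2) <|
      Sum.elim .alternating fun b : Bool => b.rec .input .conjugator) <| by
    rintro (⟨a, i, j⟩ | _ | k | _)
    exacts [⟨.inl (a, i, j), rfl⟩, ⟨.inr (.inr false), rfl⟩, ⟨.inr (.inl k), rfl⟩,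
      ⟨.inr (.inr true), rfl⟩]

/-- The generators `1 + a Eᵢⱼ` of the free group. -/
def freeRoot (a : Option A) (i j : Fin 5) : FreeGroup (Generator A) := .of (.root a i j)

/-- The relators which do not depend on the input word. -/
def relators (r : FreeMonoid A → FreeMonoid A → Prop) (z : FreeMonoid A) :
    Set (FreeGroup (Generator A)) :=
  (fun p : FreeGroup (Generator A) × FreeGroup (Generator A) => p.1 * p.2⁻¹) ''
    {p | RootRelation r z freeRoot p.1 p.2} ∪
  Set.range (fun k => .of .input * .of (.alternating k) *
    (.of (.alternating k) ^ 2 * .of .input)⁻¹) ∪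
  {.of .conjugator * .of .input * (freeRoot none 0 1 * .of .conjugator)⁻¹}

/-- The relator that identifies the generator `input` with the matrix of the word `u`. -/
noncomputable def inputRelator (u : FreeMonoid A) : FreeGroup (Generator A) :=
  .of .input * (wordRoot freeRoot u 0 2)⁻¹

/-- The group of matrices over the ring defined by `r` and `z`, extended by further generators
which collapse if `u` vanishes in the ring, and which otherwise allow for alternating quotients. -/
abbrev WordGroup (r : FreeMonoid A → FreeMonoid A → Prop) (z u : FreeMonoid A) : Type _ :=
  PresentedGroup (insert (inputRelator u) (relators r z))

variable {r : FreeMonoid A → FreeMonoid A → Prop} {z u : FreeMonoid A}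

theorem finite_relators [Finite A]
    (hr : {p : FreeMonoid A × FreeMonoid A | r p.1 p.2}.Finite) : (relators r z).Finite :=
  (((RootRelation.finite hr).image _).union (Set.finite_range _)).union (Set.finite_singleton _)

theorem forall_mem_relators_iff {H : Type*} [Group H] (φ : FreeGroup (Generator A) →* H) :
    (∀ x ∈ insert (inputRelator u) (relators r z), φ x = 1) ↔
      φ (.of .input) = wordRoot (fun a i j => φ (freeRoot a i j)) u 0 2 ∧
      (∀ x y, RootRelation r z (fun a i j => φ (freeRoot a i j)) x y → x = y) ∧
      (∀ k, φ (.of .input) * φ (.of (.alternating k)) =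
        φ (.of (.alternating k)) ^ 2 * φ (.of .input)) ∧
      φ (.of .conjugator) * φ (.of .input) = φ (freeRoot none 0 1) * φ (.of .conjugator) := by
  have hroot : (∀ x y, RootRelation r z freeRoot x y → φ x = φ y) ↔
      ∀ x y, RootRelation r z (fun a i j => φ (freeRoot a i j)) x y → x = y := by
    refine ⟨fun h x y hxy => ?_, fun h x y hxy => h _ _ (hxy.map φ)⟩
    obtain ⟨x', y', hxy', rfl, rfl⟩ := hxy.exists_of_map
    exact h x' y' hxy'
  simp only [← hroot, relators, inputRelator, Set.forall_mem_insert, Set.mem_union, or_imp,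
    forall_and, Set.forall_mem_image, Set.mem_ofPred_eq, Prod.forall, Set.forall_mem_range,
    Set.mem_singleton_iff, forall_eq, map_mul, map_inv, map_pow, mul_inv_eq_one, map_wordRoot,
    and_assoc]

theorem isCyclic_wordGroup {v : FreeMonoid A} (h : conGen r u (z * v)) :
    IsCyclic (WordGroup r z u) := by
  let π : FreeGroup (Generator A) →* WordGroup r z u := PresentedGroup.mk _
  obtain ⟨hinput, hroot, halt, hconj⟩ :=
    (forall_mem_relators_iff π).1 fun _ => PresentedGroup.one_of_mem
  have hst := RootRelation.isSteinberg hroot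
  have hle : conGen r ≤ hst.wordCon :=
    Con.conGen_le.2 fun _ _ h _ _ hij => hroot _ _ (.rule h hij)
  have hu := hle h (by decide : (0 : Fin 5) ≠ 2)
  rw [hst.wordRoot_mul_eq_one (fun i j hij => hroot _ _ (.zero hij)) v (by decide)] at hu
  rw [hu] at hinput
  simp only [hinput, one_mul, mul_one, pow_two, left_eq_mul, right_eq_mul] at halt hconj
  have hone (a i j) : π (freeRoot a i j) = 1 := by
    rcases eq_or_ne i j with rfl | hij
    · exact hroot _ _ (.diagonal a i)
    · exact hst.eq_one_of_none_eq_one (by decide) hconj a hij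
  refine ⟨PresentedGroup.of .conjugator, fun x => PresentedGroup.generated_by _ (.zpowers _) ?_ x⟩
  rintro (⟨a, i, j⟩ | _ | k | _)
  · exact (congrArg (· ∈ Subgroup.zpowers _) (hone a i j)).mpr (one_mem _)
  · exact (congrArg (· ∈ Subgroup.zpowers _) hinput).mpr (one_mem _)
  · exact (congrArg (· ∈ Subgroup.zpowers _) (halt k)).mpr (one_mem _)
  · exact Subgroup.mem_zpowers _

theorem exists_surjective_wordGroup {A : Type} [Finite A]
    {r : FreeMonoid A → FreeMonoid A → Prop} {z u : FreeMonoid A} {L : Set (FreeMonoid A)}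
    (hL : L.Finite) (hu : u ∈ L) (hr : ∀ l m, r l m → ∀ p s, p * l * s ∈ L ↔ p * m * s ∈ L)
    (hz : ∀ p s, p * z * s ∉ L) :
    ∃ m₀, ∀ m ≥ m₀, ∃ φ : WordGroup r z u →* alternatingGroup (Fin m), Surjective φ := by
  obtain ⟨H, _, _, g, hg, hdiag, hrule, hord⟩ := exists_finite_isSteinberg hL hu hr hz
  obtain ⟨m₀, hm₀⟩ := exists_hom_alternatingGroup_generators
    (hord (i := 0) (j := 2) (by decide)).2.1 (hord (i := 0) (j := 1) (by decide)).2.2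
  refine ⟨m₀, fun m hm => ?_⟩
  obtain ⟨φ, y, h, hy, hsq, hconj⟩ := hm₀ m hm
  have hroot (x x') (hx : RootRelation r z g x x') : x = x' := by
    cases hx with
    | commute a b hij hpq hjp hiq =>
      exact commutatorElement_eq_one_iff_commute.2 (hg.rootCommute a b hij hpq hjp hiq)
    | mul_none a hik hkj hij => exact hg.mul_none a hik hkj hij
    | none_mul a hik hkj hij => exact hg.none_mul a hik hkj hij
    | diagonal a i => exact hdiag a i
    | rule h hij => exact hrule _ _ h hij
    | zero hij => exact (hord hij).1
  let f : Generator A → alternatingGroup (Fin m)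
    | .root a i j => φ (g a i j)
    | .input => φ (wordRoot g u 0 2)
    | .alternating k => y k
    | .conjugator => h
  have hf : ∀ x ∈ insert (inputRelator u) (relators r z), FreeGroup.lift f x = 1 := by
    simp only [forall_mem_relators_iff, freeRoot, FreeGroup.lift_apply_of, f]
    refine ⟨map_wordRoot .., fun _ _ hx => ?_, hsq, hconj⟩
    obtain ⟨x, x', hx', rfl, rfl⟩ := hx.exists_of_map
    exact congrArg φ (hroot x x' hx')
  refine ⟨PresentedGroup.toGroup hf, MonoidHom.range_eq_top.1 (top_le_iff.1 ?_)⟩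
  rw [← hy, Subgroup.closure_le]
  rintro _ ⟨k, rfl⟩
  exact ⟨.of (.alternating k), PresentedGroup.toGroup.of hf⟩

end Presentation

section Encoding

open Encodable

theorem primrec_count {p : ℕ → Prop} [DecidablePred p] (hp : PrimrecPred p) :
    Primrec (Nat.count p) := by
  refine (Primrec.nat_rec₁ 0 (f := fun n m => m + if p n then 1 else 0) ?_).of_eq fun n => ?_
  · exact Primrec.nat_add.comp Primrec.snd
      (Primrec.ite (hp.comp Primrec.fst) (Primrec.const 1) (Primrec.const 0))
  · induction n with
    | zero => exact (Nat.count_zero p).symm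
    | succ n ih => exact (congrArg (· + _) ih).trans (Nat.count_succ p n).symm

theorem primrec_encode_ofEncodableOfInfinite {α : Type*} [Primcodable α] [Infinite α] {f : ℕ → α}
    (hf : Primrec f) :
    Primrec fun n => @encode α (Denumerable.ofEncodableOfInfinite α).toEncodable (f n) := by
  let := decidableRangeEncode α
  exact ((primrec_count (Primcodable.mem_range_encode (α := α))).comp
    (Primrec.encode.comp hf)).of_eq fun _ => rfl

-- The encoding of `Σ s, List (List (Fin s × Bool))` uses the instance
-- `Denumerable.ofEncodableOfInfinite` rather than `Primcodable.list`.
theorem computable_presentation {s : ℕ} {L : ℕ → List (List (Fin s × Bool))}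
    (hL : @Primrec ℕ _ _ (@Primcodable.list _ (@Primcodable.list _ _)) L) :
    Computable fun n => (⟨s, L n⟩ : Σ s : ℕ, List (List (Fin s × Bool))) :=
  Computable.encode_iff.1 <| (Primrec₂.natPair.comp (Primrec.const s) <|
    @primrec_encode_ofEncodableOfInfinite _ (@Primcodable.list _ (@Primcodable.list _ _)) _ _
      hL).to_comp.of_eq fun _ => rfl

end Encoding

section Words

theorem primrec_bits : Primrec Nat.bits := by
  have h : Primrec₂ fun (_ : Unit) => Nat.bits := by
    refine Primrec.nat_strong_rec _
      (g := fun _ l => if l.length = 0 then some [] else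
        (l[l.length.div2]?).map (l.length.bodd :: ·)) ?_ fun _ n => ?_
    · have hlen : Primrec fun p : Unit × List (List Bool) => p.2.length :=
        Primrec.list_length.comp Primrec.snd
      refine Primrec.ite (Primrec.eq.comp hlen (Primrec.const 0)) (Primrec.const _) <|
        Primrec.option_map (Primrec.list_getElem?.comp Primrec.snd (Primrec.nat_div2.comp hlen)) ?_
      exact Primrec.list_cons.comp (Primrec.nat_bodd.comp (hlen.comp Primrec.fst)) Primrec.snd
    · rcases eq_or_ne n 0 with rfl | hn
      · simp
      · have hbits : n.bodd :: n.div2.bits = n.bits := by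
          conv_rhs => rw [← Nat.bit_bodd_div2 n]
          exact (Nat.bits_append_bit _ _ fun h => by
            by_contra hb
            exact hn (by rw [← Nat.bit_bodd_div2 n, h]; simpa using hb)).symm
        have hlt : n.div2 < n := by rw [Nat.div2_val]; omega
        simp [hn, hlt, hbits]
  exact h.comp (Primrec.const ()) Primrec.id

variable {A α : Type*}

/-- The commutator of two words in the generators of a free group and their inverses. -/
def commutatorWord (v w : List (α × Bool)) : List (α × Bool) :=
  v ++ w ++ (FreeGroup.invRev v ++ FreeGroup.invRev w)

theorem mk_commutatorWord (v w : List (α × Bool)) :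
    FreeGroup.mk (commutatorWord v w) = ⁅FreeGroup.mk v, FreeGroup.mk w⁆ :=
  (mul_assoc (FreeGroup.mk v * FreeGroup.mk w) (FreeGroup.mk v)⁻¹ (FreeGroup.mk w)⁻¹).symm

theorem primrec_invRev [Primcodable α] :
    Primrec (FreeGroup.invRev : List (α × Bool) → List (α × Bool)) :=
  Primrec.list_reverse.comp <| Primrec.list_map Primrec.id <|
    (Primrec.fst.comp Primrec.snd).pair (Primrec.not.comp (Primrec.snd.comp Primrec.snd))

theorem primrec_commutatorWord [Primcodable α] :
    Primrec₂ (commutatorWord : List (α × Bool) → List (α × Bool) → List (α × Bool)) :=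
  Primrec.list_append.comp (Primrec.list_append.comp Primrec.fst Primrec.snd)
    (Primrec.list_append.comp (primrec_invRev.comp Primrec.fst) (primrec_invRev.comp Primrec.snd))

theorem exists_primrec_wordRoot [Primcodable A] [Finite A] [Primcodable α]
    (X : Option A → Fin 5 → Fin 5 → List (α × Bool)) :
    ∃ f : List A → Fin 5 → Fin 5 → List (α × Bool), Primrec f ∧ ∀ u i j,
      FreeGroup.mk (f u i j) = wordRoot (fun a i j => FreeGroup.mk (X a i j)) (.ofList u) i j := by
  let k (i j : Fin 5) : Fin 5 := (exists_fin_five_ne i j i j).choose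
  refine ⟨fun u => u.foldr (fun a Y i j => commutatorWord (X (some a) i (k i j)) (Y (k i j) j))
    (X none), ?_, fun u => ?_⟩
  · refine Primrec.list_foldr (h := fun _ (p : A × (Fin 5 → Fin 5 → List (α × Bool))) i j =>
      commutatorWord (X (some p.1) i (k i j)) (p.2 (k i j) j)) Primrec.id (Primrec.const _) ?_
    have hX : Primrec fun p : A × Fin 5 × Fin 5 => X (some p.1) p.2.1 (k p.2.1 p.2.2) :=
      Primrec.dom_finite _
    have hk : Primrec₂ k := Primrec.dom_finite _
    have hp : Primrec fun q : ((List A × A × (Fin 5 → Fin 5 → List (α × Bool))) × Fin 5) × Fin 5 =>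
        q.1.1.2 := Primrec.snd.comp (Primrec.fst.comp Primrec.fst)
    refine Primrec.fin_curry.2 (Primrec.fin_curry.2 (primrec_commutatorWord.comp
      (hX.comp (.pair (.comp .fst hp) (.pair (.comp .snd .fst) .snd)))
      (Primrec.fin_app.comp (Primrec.fin_app.comp (.comp .snd hp)
        (hk.comp (.comp .snd .fst) .snd)) .snd)))
  · induction u with
    | nil => exact fun _ _ => rfl
    | cons a u ih =>
      exact fun i j => (mk_commutatorWord _ _).trans (congrArg _ (ih _ j))

end Words

section Presentations

theorem exists_computable_presentation {α : Type*} [Primcodable α] [Finite α]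
    {R : Set (FreeGroup α)} (hR : R.Finite) {x : ℕ → List (α × Bool)} (hx : Primrec x) :
    ∃ (s : ℕ) (L : ℕ → List (List (Fin s × Bool))),
      Computable (fun n => (⟨s, L n⟩ : Σ s : ℕ, List (List (Fin s × Bool)))) ∧
      ∀ n, Nonempty
        (PresentedGroup (insert (FreeGroup.mk (x n)) R) ≃* presentedGroupOf ⟨s, L n⟩) := by
  classical
  obtain ⟨s, ⟨e⟩⟩ := Finite.exists_equiv_fin α
  let rename (w : List (α × Bool)) : List (Fin s × Bool) := w.map fun a => (e a.1, a.2)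
  have hrename : Primrec rename :=
    Primrec.list_map Primrec.id <|
      (Primrec.dom_finite fun a : α × Bool => (e a.1, a.2)).comp Primrec.snd
  let L (n : ℕ) := rename (x n) :: hR.toFinset.toList.map fun y => rename y.toWord
  refine ⟨s, L, computable_presentation
    (Primrec.list_cons.comp (hrename.comp hx) (Primrec.const _)), fun n => ⟨?_⟩⟩
  have hmk (y : FreeGroup α) :
      FreeGroup.mk (rename y.toWord) = FreeGroup.freeGroupCongr e y :=
    congrArg (FreeGroup.freeGroupCongr e) FreeGroup.mk_toWord
  have hL : FreeGroup.freeGroupCongr e '' insert (FreeGroup.mk (x n)) R =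
      {y | ∃ w ∈ L n, y = FreeGroup.mk w} := by
    ext y
    constructor
    · rintro ⟨y, rfl | hy, rfl⟩
      · exact ⟨_, .head _, rfl⟩
      · exact ⟨_, .tail _ (List.mem_map_of_mem (by simpa using hy)), (hmk y).symm⟩
    · rintro ⟨_, _ | ⟨_, hw⟩, rfl⟩
      · exact ⟨_, Set.mem_insert _ _, rfl⟩
      · obtain ⟨y, hy, rfl⟩ := List.mem_map.1 hw
        exact ⟨y, .inr (by simpa using hy), (hmk y).symm⟩
  exact (PresentedGroup.equivPresentedGroup _ e).trans <|
    QuotientGroup.quotientMulEquivOfEq (congrArg Subgroup.normalClosure hL)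

namespace StackMachine

variable {T K A : Type*} (M : StackMachine T K A)

theorem finite_rule [Finite T] [Finite K] [Finite A] :
    {p : FreeMonoid (Letter T K A) × FreeMonoid (Letter T K A) | M.Rule p.1 p.2}.Finite := by
  let step (p : T × A) : FreeMonoid (Letter T K A) × FreeMonoid (Letter T K A) :=
    let c := (M.next p.1 p.2).getD ([], p.1)
    (.of (.inl p.1) * tapeWord [some (M.track p.1, p.2)],
      .of (.inl c.2) * tapeWord (c.1.map (fun b => some (M.track p.1, b)) ++ [none]))
  let comm (p : Option (K × A) × Option (K × A)) :
      FreeMonoid (Letter T K A) × FreeMonoid (Letter T K A) :=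
    (tapeWord [p.1, p.2], tapeWord [p.2, p.1])
  refine (Set.finite_range (Sum.elim step comm)).subset ?_
  rintro ⟨_, _⟩ (@⟨q, q', a, l, h⟩ | @⟨x, y, -⟩)
  · exact ⟨.inl (q, a), by simp only [Sum.elim_inl, step, h]; rfl⟩
  · exact ⟨.inr (x, y), rfl⟩

end StackMachine

theorem Acceptor.exists_primrec_inputRelator {T K A : Type} [Finite T] [Finite K] [Finite A]
    [DecidableEq K] [Primcodable (Generator (Letter T K A))] (M : Acceptor T K A) :
    ∃ x : ℕ → List (Generator (Letter T K A) × Bool), Primrec x ∧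
      ∀ n, FreeGroup.mk (x n) = inputRelator (M.inputWord n.bits) := by
  obtain ⟨m, ⟨e⟩⟩ := Finite.exists_equiv_fin (Letter T K A)
  let : Primcodable (Letter T K A) := Primcodable.ofEquiv _ e
  obtain ⟨f, hf, hmk⟩ := exists_primrec_wordRoot (A := Letter T K A)
    fun a i j => [(Generator.root a i j, true)]
  have hinput : Primrec fun n : ℕ => (M.inputWord n.bits).toList := by
    let symbol (b : Bool) : Letter T K A := .inr (some (M.inputTrack, M.symbol b))
    have : Primrec fun n : ℕ => .inl M.start :: (n.bits.map symbol ++ M.baseTape.map .inr) :=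
      Primrec.list_cons.comp (Primrec.const _) <| Primrec.list_append.comp
        (Primrec.list_map primrec_bits ((Primrec.dom_finite symbol).comp Primrec.snd))
        (Primrec.const _)
    refine this.of_eq fun n => ?_
    simp [Acceptor.inputWord, tapeWord, symbol]
  refine ⟨fun n => (.input, true) ::
    FreeGroup.invRev (f (M.inputWord n.bits).toList 0 2), ?_, fun n => ?_⟩
  · exact Primrec.list_cons.comp (Primrec.const _) <| primrec_invRev.comp <|
      Primrec.fin_app.comp (Primrec.fin_app.comp (hf.comp hinput) (Primrec.const 0))
        (Primrec.const 2)
  · exact congrArg (FreeGroup.of .input * ·⁻¹) (hmk _ 0 2)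

end Presentations

theorem exists_partrec_not_computablePred_of_separates : ∃ f : ℕ →. ℕ, Partrec f ∧
    ∀ P : ℕ → Prop, (∀ n, 0 ∈ f n → ¬ P n) → (∀ n, 1 ∈ f n → P n) → ¬ ComputablePred P := by
  refine ⟨fun n => (Denumerable.ofNat Nat.Partrec.Code n).eval n,
    Nat.Partrec.Code.eval_part.comp (Computable.ofNat _) Computable.id, ?_⟩
  rintro P h₀ h₁ ⟨_, hP⟩
  have hg : Computable fun n => bif P n then 0 else 1 :=
    Computable.cond hP (Computable.const 0) (Computable.const 1)
  obtain ⟨c, hc⟩ := Nat.Partrec.Code.exists_code.1 (Partrec.nat_iff.1 hg.partrec)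
  have hmem : (bif P (Encodable.encode c) then 0 else 1) ∈
      (Denumerable.ofNat Nat.Partrec.Code (Encodable.encode c)).eval (Encodable.encode c) := by
    rw [Denumerable.ofNat_encode, hc]
    exact Part.mem_some _
  by_cases h : P (Encodable.encode c)
  · exact h₀ _ (by simpa [h] using hmem) h
  · exact h (h₁ _ (by simpa [h] using hmem))

theorem stmt_4_general {P : (Σ s : ℕ, List (List (Fin s × Bool))) → Prop}
    (hcyclic : ∀ p, IsCyclic (presentedGroupOf p) → ¬ P p)
    (halternating : ∀ p, (∃ m₀, ∀ m ≥ m₀,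
      ∃ φ : presentedGroupOf p →* alternatingGroup (Fin m), Surjective φ) → P p) :
    ¬ ComputablePred P := by
  obtain ⟨f, hf, hsep⟩ := exists_partrec_not_computablePred_of_separates
  obtain ⟨T, K, A, _, _, _, _, M, hM⟩ := exists_acceptor hf
  obtain ⟨k, ⟨e⟩⟩ := Finite.exists_equiv_fin (Generator (Letter T K A))
  let : Primcodable (Generator (Letter T K A)) := Primcodable.ofEquiv _ e
  obtain ⟨x, hx, hxr⟩ := M.exists_primrec_inputRelator
  obtain ⟨s, L, hL, hLx⟩ := exists_computable_presentation
    (finite_relators (z := M.acceptWord) M.finite_rule) hx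
  refine fun hP => hsep (fun n => P ⟨s, L n⟩) (fun n hn => hcyclic _ ?_)
    (fun n hn => halternating _ ?_) (.computable_of_manyOneReducible ⟨_, hL, fun _ => Iff.rfl⟩ hP)
  all_goals obtain ⟨ψ⟩ := hxr n ▸ hLx n
  · obtain ⟨v, hv⟩ := ((hM n).1 hn).conGen_inputWord
    have := isCyclic_wordGroup hv
    exact isCyclic_of_surjective ψ ψ.surjective
  · obtain ⟨U, hU, hu, hrule, haccept⟩ := ((hM n).2 hn).exists_language
    obtain ⟨m₀, hm₀⟩ := exists_surjective_wordGroup hU hu hrule haccept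
    refine ⟨m₀, fun m hm => ?_⟩
    obtain ⟨φ, hφ⟩ := hm₀ m hm
    exact ⟨φ.comp ψ.symm.toMonoidHom, hφ.comp ψ.symm.surjective⟩

/-- Theorem 1(i) for an infinite family of alternating groups: there is no algorithm that,
given a finite presentation, decides whether the group presented has a quotient isomorphic to
`Alt(n)` for some `n ∈ S`. -/
theorem stmt_4 (S : Set ℕ) (hS : S.Infinite) (hS5 : ∀ n ∈ S, 5 ≤ n) :
    ¬ ComputablePred (fun p : Σ s : ℕ, List (List (Fin s × Bool)) =>
        ∃ n ∈ S, ∃ φ : presentedGroupOf p →* alternatingGroup (Fin n),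
          Function.Surjective φ) := by
  refine stmt_4_general (fun p _ => ?_) fun p ⟨m₀, hm₀⟩ => ?_
  · rintro ⟨n, hn, φ, hφ⟩
    have h := alternatingGroup.isCyclic_iff_card_le_three.1 (isCyclic_of_surjective φ hφ)
    rw [Nat.card_fin] at h
    exact absurd (hS5 n hn) (by omega)
  · obtain ⟨m, hm, hlt⟩ := hS.exists_gt m₀
    exact ⟨m, hm, hm₀ m hlt.le⟩
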